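/- arXiv:2104.05455 — 2 statements merged into one kernel-verified Lean document; each statement's English description precedes it below -/
import Mathlib

section
/- Let K be a Hilbertian field, r, s ≥ 1, and let P_1,…,P_l ∈ K[T,Y] (T an r-tuple and Y an s-tuple of variables) be polynomials such that the ideal p̃_T = ⟨P_1,…,P_l⟩ of K(T)[Y] is prime and the field extension Frac(K(T)[Y]/p̃_T) of K(T) is separable. Let d be the Krull dimension of K(T)[Y]/p̃_T. Then the set of t ∈ K^r such that the specialized ideal p_t = ⟨P_1(t,Y),…,P_l(t,Y)⟩ of K[Y] is prime and K[Y]/p_t has Krull dimension d is Zariski-dense in K^r. -/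
open MvPolynomial

noncomputable section

/-- The rational function field `K(T)` with variables indexed by `ι`,
realized as the fraction field of the polynomial ring. -/
abbrev RatFuncField (K : Type) [Field K] (ι : Type) : Type := FractionRing (MvPolynomial ι K)

/-- `x ∈ K(T)` can be specialized at `t ∈ K^ι` with value `v`:
there is a representation `x = a/b` with `b(t) ≠ 0` and `v = a(t)/b(t)`. -/
def RatSpecializesTo (K : Type) [Field K] {ι : Type} (t : ι → K)
    (x : RatFuncField K ι) (v : K) : Prop :=
  ∃ a b : MvPolynomial ι K, MvPolynomial.eval t b ≠ 0 ∧
    algebraMap (MvPolynomial ι K) (RatFuncField K ι) b * x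
      = algebraMap (MvPolynomial ι K) (RatFuncField K ι) a ∧
    MvPolynomial.eval t b * v = MvPolynomial.eval t a

/-- `P ∈ K(T)[Y]` specializes at `t` (coefficientwise) to `q ∈ K[Y]`. -/
def PolySpecializesTo (K : Type) [Field K] {ι : Type} {s : ℕ} (t : ι → K)
    (P : MvPolynomial (Fin s) (RatFuncField K ι)) (q : MvPolynomial (Fin s) K) : Prop :=
  ∀ mono : Fin s →₀ ℕ, RatSpecializesTo K t (P.coeff mono) (q.coeff mono)

/-- `H` is a Hilbert subset of `K^ι`: the set of points where finitely many irreducible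
polynomials of `K(T)[Y]` specialize to irreducible polynomials of `K[Y]`, intersected
with a nonempty Zariski-open subset. -/
def IsHilbertSubset (K : Type) [Field K] (ι : Type) (H : Set (ι → K)) : Prop :=
  ∃ (s l n : ℕ) (p : Fin l → MvPolynomial (Fin s) (RatFuncField K ι))
    (g : Fin n → MvPolynomial ι K),
    (∀ i, Irreducible (p i)) ∧
    (∃ t : ι → K, ∃ j, MvPolynomial.eval t (g j) ≠ 0) ∧
    H = {t | (∃ j, MvPolynomial.eval t (g j) ≠ 0) ∧
      ∀ i, ∃ q : MvPolynomial (Fin s) K, PolySpecializesTo K t (p i) q ∧ Irreducible q}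

/-- A subset of `K^ι` is Zariski-dense iff for every nonzero polynomial `g` it contains a
point where `g` does not vanish. -/
def IsZariskiDense (K : Type) [Field K] {ι : Type} (S : Set (ι → K)) : Prop :=
  ∀ g : MvPolynomial ι K, g ≠ 0 → ∃ t ∈ S, MvPolynomial.eval t g ≠ 0

/-- A field is Hilbertian if all its Hilbert subsets (of all `K^r`, `r ≥ 1`) are
Zariski-dense. -/
def IsHilbertianField (K : Type) [Field K] : Prop :=
  ∀ r : ℕ, 0 < r → ∀ H : Set (Fin r → K), IsHilbertSubset K (Fin r) H → IsZariskiDense K H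

/-- The canonical ring homomorphism `K[T,Y] → K(T)[Y]`. -/
def extHom (K : Type) [Field K] (r s : ℕ) :
    MvPolynomial (Fin r ⊕ Fin s) K →+* MvPolynomial (Fin s) (RatFuncField K (Fin r)) :=
  MvPolynomial.eval₂Hom
    ((MvPolynomial.C).comp
      ((algebraMap (MvPolynomial (Fin r) K) (RatFuncField K (Fin r))).comp MvPolynomial.C))
    (Sum.elim
      (fun i => MvPolynomial.C
        (algebraMap (MvPolynomial (Fin r) K) (RatFuncField K (Fin r)) (MvPolynomial.X i)))
      (fun j => MvPolynomial.X j))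

/-- The specialization homomorphism `K[T,Y] → K[Y]`, `T ↦ t`. -/
def specHom (K : Type) [Field K] {r s : ℕ} (t : Fin r → K) :
    MvPolynomial (Fin r ⊕ Fin s) K →+* MvPolynomial (Fin s) K :=
  MvPolynomial.eval₂Hom MvPolynomial.C
    (Sum.elim (fun i => MvPolynomial.C (t i)) (fun j => MvPolynomial.X j))

/-- `L` is a separable extension of `F` in the general sense (equivalently, `L` is
linearly disjoint from the perfect closure of `F`, equivalently `L ⊗_F F̄` is reduced);
the extension is given by the ring homomorphism `f : F → L`. -/
def IsSepExtOfHom (F L : Type) [Field F] [CommRing L] (f : F →+* L) : Prop :=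
  letI : Algebra F L := f.toAlgebra
  IsReduced (TensorProduct F (AlgebraicClosure F) L)

/-- `Frac(A)` is a separable extension of `F` in the general sense. -/
def IsSepOverBase (F : Type) [Field F] (A : Type) [CommRing A] [Algebra F A] : Prop :=
  IsSepExtOfHom F (FractionRing A) ((algebraMap A (FractionRing A)).comp (algebraMap F A))

/-- The height of an ideal: the infimum over primes containing it of the lengths of
chains of primes below.  For a prime ideal this is the usual height. -/
def idealHeight {R : Type} [CommRing R] (I : Ideal R) : ℕ∞ :=
  ⨅ p : {q : PrimeSpectrum R // I ≤ q.asIdeal}, Order.height p.1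

/-- The monomials in `s` variables of total degree at most `D`. -/
def MonLE (s D : ℕ) : Type := {m : Fin s →₀ ℕ // m.degree ≤ D}

noncomputable instance (s D : ℕ) : Fintype (MonLE s D) :=
  (Finsupp.finite_of_degree_le D).fintype

/-- The generic polynomial of degree `D`, with parameter variables `v m`, `m` a monomial of
degree at most `D`, as an element of `K[Λ][Y]`. -/
def genPoly (K : Type) [Field K] (s D : ℕ) {Λ : Type} (v : MonLE s D → Λ) :
    MvPolynomial (Fin s) (MvPolynomial Λ K) :=
  ∑ m : MonLE s D, MvPolynomial.monomial m.1 (MvPolynomial.X (v m))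

/-- The generic polynomial of degree `D` specialized at `lam ∈ K^{N_D}`. -/
def genPolyAt (K : Type) [Field K] (s D : ℕ) (lam : MonLE s D → K) :
    MvPolynomial (Fin s) K :=
  ∑ m : MonLE s D, MvPolynomial.monomial m.1 (lam m)

/-- Substitution `T_i ↦ U_i(Y)` as a ring homomorphism `K[T,Y] → K[Y]`. -/
def polySubstHom (K : Type) [Field K] {r s : ℕ} (U : Fin r → MvPolynomial (Fin s) K) :
    MvPolynomial (Fin r ⊕ Fin s) K →+* MvPolynomial (Fin s) K :=
  MvPolynomial.eval₂Hom MvPolynomial.C (Sum.elim U (fun j => MvPolynomial.X j))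

/-- The quasi-generic polynomial `Q_{S,R}(Λ,Y) = ∑_i Λ_i Q_i(Y) + R(Y)` of base `(S,R)`,
where `S = {monomial (m 0), …, monomial (m n)}`, as an element of `K[Λ][Y]`. -/
def quasiGen (K : Type) [Field K] {s n : ℕ} (m : Fin (n + 1) → (Fin s →₀ ℕ))
    (R : MvPolynomial (Fin s) K) :
    MvPolynomial (Fin s) (MvPolynomial (Fin (n + 1)) K) :=
  (∑ i, MvPolynomial.monomial (m i) (MvPolynomial.X i)) +
    MvPolynomial.map (MvPolynomial.C) R

/-- Hypothesis (H) for the triple `(p, S, R)` (with `S` the set of monomials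
`monomial (m i)`, `m 0 = 0`): the map `φ_{S,R}` sending `(a_1,…,a_n)` to the class mod `E`
of `∑_{i ≥ 1} a_i Q_i(Y) + R(Y)` in `B/E` is not identically zero, where `B = K[Y]/p` and
`E ⊆ B` is the subfield of elements algebraic over `K`. -/
def HypothesisH (K : Type) [Field K] {s n : ℕ} (p : Ideal (MvPolynomial (Fin s) K))
    (m : Fin (n + 1) → (Fin s →₀ ℕ)) (R : MvPolynomial (Fin s) K) : Prop :=
  ∃ a : Fin (n + 1) → K,
    Ideal.Quotient.mk p ((∑ i ∈ Finset.univ.erase 0, MvPolynomial.monomial (m i) (a i)) + R)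
      ∉ integralClosure K (MvPolynomial (Fin s) K ⧸ p)


open scoped TensorProduct


theorem aux_dickson {ι : Type} [Finite ι] (D : Set (ι →₀ ℕ)) :
    ∃ D0 : Finset (ι →₀ ℕ), (∀ a ∈ D0, a ∈ D) ∧ ∀ a ∈ D, ∃ b ∈ D0, b ≤ a := by
  have hfin : {a | Minimal (· ∈ D) a}.Finite :=
    WellQuasiOrderedLE.finite_of_isAntichain (setOfPred_minimal_antichain _)
  refine ⟨hfin.toFinset, fun a ha => ?_, fun a ha => ?_⟩
  · simp at ha; exact ha.1
  · obtain ⟨b, hb, hb2⟩ := exists_minimal_le_of_wellFoundedLT (· ∈ D) a ha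
    exact ⟨b, by simpa using hb2, hb⟩

theorem aux_div {R ι : Type} [CommRing R] [IsDomain R] [Finite ι] (m : MonomialOrder ι)
    (J : Ideal (MvPolynomial ι R)) :
    ∃ g : R, g ≠ 0 ∧ ∀ (𝔞 : Ideal R) (δ : m.syn) (f : MvPolynomial ι R),
      (∀ a ∈ f.support, m.toSyn a ≤ δ) → (∀ a, f.coeff a ∈ 𝔞) →
      ∃ N : ℕ, ∃ j ∈ J, ∃ v : MvPolynomial ι R, C (g ^ N) * f = j + v ∧
        (∀ a ∈ v.support, ∀ h ∈ J, h ≠ 0 → m.degree h ≠ a) ∧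
        (∀ a ∈ v.support, m.toSyn a ≤ δ) ∧ (∀ a, v.coeff a ∈ 𝔞) := by
  classical
  obtain ⟨D0, hD0, hD⟩ := aux_dickson {a | ∃ h ∈ J, h ≠ 0 ∧ m.degree h = a}
  choose! h hJ h0 hdeg using hD0
  refine ⟨∏ b ∈ D0, m.leadingCoeff (h b), Finset.prod_ne_zero_iff.2
    (fun b hb => m.leadingCoeff_ne_zero_iff.2 (h0 b hb)), ?_⟩
  set g := ∏ b ∈ D0, m.leadingCoeff (h b) with hg
  intro 𝔞 δ f
  -- induction on the degree
  induction hn : m.toSyn (m.degree f) using WellFoundedLT.induction generalizing f with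
  | _ n ih =>
  intro hδ ha
  by_cases hf : f = 0
  · exact ⟨0, 0, J.zero_mem, 0, by simp [hf], by simp, by simp, by simp⟩
  have key : ∀ f' : MvPolynomial ι R, (∀ a ∈ f'.support, m.toSyn a ≤ n) →
      f'.coeff (m.degree f) = 0 → f' = 0 ∨ m.toSyn (m.degree f') < n := by
    intro f' h1 h2
    by_cases hf' : f' = 0
    · exact Or.inl hf'
    · right
      refine lt_of_le_of_ne (h1 _ (m.degree_mem_support hf')) ?_
      intro h3
      have : m.degree f' = m.degree f := m.toSyn.injective (by rw [h3, hn])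
      rw [← this] at h2
      exact hf' (m.coeff_degree_eq_zero_iff.1 h2)
  have ih' : ∀ f' : MvPolynomial ι R, (∀ a ∈ f'.support, m.toSyn a ≤ n) →
      f'.coeff (m.degree f) = 0 → (∀ a, f'.coeff a ∈ 𝔞) →
      ∃ N : ℕ, ∃ j ∈ J, ∃ v : MvPolynomial ι R, C (g ^ N) * f' = j + v ∧
        (∀ a ∈ v.support, ∀ h ∈ J, h ≠ 0 → m.degree h ≠ a) ∧
        (∀ a ∈ v.support, m.toSyn a ≤ δ) ∧ (∀ a, v.coeff a ∈ 𝔞) := by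
    intro f' h1 h2 h3
    rcases key f' h1 h2 with h4 | h4
    · exact ⟨0, 0, J.zero_mem, 0, by simp [h4], by simp, by simp, by simp⟩
    · exact ih _ h4 f' rfl (fun a ha => (h1 a ha).trans
        (hn ▸ hδ _ (m.degree_mem_support hf))) h3
  have hle : ∀ a ∈ f.support, m.toSyn a ≤ n := fun a ha => hn ▸ m.le_degree ha
  by_cases hstd : ∀ h ∈ J, h ≠ 0 → m.degree h ≠ m.degree f
  · -- standard leading monomial
    obtain ⟨N, j, hj, v, hv, hv1, hv2, hv3⟩ := ih' (f - monomial (m.degree f) (m.leadingCoeff f))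
      (fun a ha => by
        have := MvPolynomial.support_sub _ _ _ ha
        rcases Finset.mem_union.1 this with h | h
        · exact hle a h
        · have := support_monomial_subset h
          simp at this; rw [this, hn])
      (by simp [MonomialOrder.leadingCoeff])
      (fun a => by
        rw [coeff_sub, coeff_monomial]
        refine 𝔞.sub_mem (ha a) ?_
        split_ifs
        · exact ha _
        · exact 𝔞.zero_mem)
    refine ⟨N, j, hj, v + monomial (m.degree f) (g ^ N * m.leadingCoeff f), ?_, ?_, ?_, ?_⟩
    · rw [← add_assoc, ← hv, ← C_mul_monomial]; ring
    · intro a h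
      rcases Finset.mem_union.1 (MvPolynomial.support_add h) with h | h
      · exact hv1 a h
      · have := support_monomial_subset h
        simp at this; rw [this]; exact hstd
    · intro a h
      rcases Finset.mem_union.1 (MvPolynomial.support_add h) with h | h
      · exact hv2 a h
      · have := support_monomial_subset h
        simp at this; rw [this]; exact hδ _ (m.degree_mem_support hf)
    · intro a
      rw [coeff_add, coeff_monomial]
      refine 𝔞.add_mem (hv3 a) ?_
      split_ifs
      · exact 𝔞.mul_mem_left _ (ha _)
      · exact 𝔞.zero_mem
  · push Not at hstd
    obtain ⟨b, hb, hba⟩ := hD (m.degree f) hstd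
    have hgb : g = (∏ b' ∈ D0.erase b, m.leadingCoeff (h b')) * m.leadingCoeff (h b) := by
      rw [hg, Finset.prod_erase_mul _ _ hb]
    set g' := ∏ b' ∈ D0.erase b, m.leadingCoeff (h b')
    have hb' : m.degree (h b) = b := hdeg b hb
    have hsum : m.degree f - b + b = m.degree f := tsub_add_cancel_of_le hba
    set q : MvPolynomial ι R := monomial (m.degree f - b) (g' * m.leadingCoeff f) * h b with hq
    have hqJ : q ∈ J := J.mul_mem_left _ (hJ b hb)
    have hqs : ∀ a ∈ q.support, m.toSyn a ≤ n := by
      intro a ha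
      refine (m.le_degree ha).trans ?_
      refine m.toSyn_degree_mul_le.trans ?_
      rw [hb', ← hn, ← hsum, map_add m.toSyn, hsum]
      gcongr
      exact m.degree_monomial_le _
    obtain ⟨N, j, hj, v, hv, hv1, hv2, hv3⟩ := ih' (C g * f - q)
      (fun a ha => by
        have := MvPolynomial.support_sub _ _ _ ha
        rcases Finset.mem_union.1 this with h | h
        · refine hle a ?_
          rw [mem_support_iff, coeff_C_mul] at h
          exact mem_support_iff.2 (right_ne_zero_of_mul h)
        · exact hqs a h)
      (by
        rw [coeff_sub, coeff_C_mul, hq, coeff_monomial_mul', if_pos tsub_le_self,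
          tsub_tsub_cancel_of_le hba, hgb]
        simp only [MonomialOrder.leadingCoeff, hb']
        ring)
      (fun a => by
        rw [coeff_sub, coeff_C_mul, hq]
        refine 𝔞.sub_mem (𝔞.mul_mem_left _ (ha a)) ?_
        rw [coeff_monomial_mul']
        split_ifs
        · exact 𝔞.mul_mem_right _ (𝔞.mul_mem_left _ (ha _))
        · exact 𝔞.zero_mem)
    refine ⟨N + 1, j + C (g ^ N) * q, J.add_mem hj (J.mul_mem_left _ hqJ), v, ?_, hv1, hv2, hv3⟩
    have : C (g ^ (N + 1)) * f = C (g ^ N) * (C g * f - q) + C (g ^ N) * q := by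
      rw [pow_succ, C_mul]; ring
    rw [this, hv]; ring

theorem aux_elim_order' (ι : Type) [Finite ι] [LinearOrder ι] (A : Set ι)
    (hA : ∀ i ∈ A, ∀ j, j ∉ A → i < j) :
    ∃ m : MonomialOrder.{0, 0} ι, ∀ a b : ι →₀ ℕ, m.toSyn a ≤ m.toSyn b →
      (∀ i ∈ A, b i = 0) → ∀ i ∈ A, a i = 0 := by
  have : WellFoundedGT ι := Finite.to_wellFoundedGT
  refine ⟨MonomialOrder.lex, fun a b hab hb => ?_⟩
  rw [MonomialOrder.lex_le_iff, le_iff_lt_or_eq] at hab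
  rcases hab with h | h
  · obtain ⟨j, hj1, hj2⟩ := h
    intro i hi
    change ∀ d, d < j → a d = b d at hj1
    change a j < b j at hj2
    by_cases hj : j ∈ A
    · rw [hb j hj] at hj2; omega
    · rw [hj1 _ (hA i hi j hj), hb i hi]
  · have : a = b := toLex.injective h
    rw [this]; exact hb

/-- An elimination order on the monomials in `σ ⊕ τ`. -/
theorem aux_elim_order (σ τ : Type) [Finite σ] [Finite τ] :
    ∃ m : MonomialOrder.{0, 0} (σ ⊕ τ), ∀ a b : (σ ⊕ τ) →₀ ℕ, m.toSyn a ≤ m.toSyn b →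
      (∀ i, b (Sum.inl i) = 0) → ∀ i, a (Sum.inl i) = 0 := by
  classical
  cases nonempty_fintype σ
  cases nonempty_fintype τ
  let _ : LinearOrder σ := LinearOrder.lift' (Fintype.equivFin σ) (Fintype.equivFin σ).injective
  let _ : LinearOrder τ := LinearOrder.lift' (Fintype.equivFin τ) (Fintype.equivFin τ).injective
  obtain ⟨m, hm⟩ := @aux_elim_order' (σ ⊕ τ) _ (inferInstanceAs (LinearOrder (σ ⊕ₗ τ)))
    (Set.range Sum.inl) (by
      rintro _ ⟨i, rfl⟩ (j | j) hj
      · simp at hj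
      · exact Sum.Lex.inl_lt_inr i j)
  exact ⟨m, fun a b hab hb i => hm a b hab (by rintro _ ⟨i, rfl⟩; exact hb i) _ ⟨i, rfl⟩⟩

theorem aux_elim {R K σ τ : Type} [CommRing R] [IsDomain R] [IsNoetherianRing R] [Field K]
    [Finite σ] [Finite τ] {α β : Type} (G : α → MvPolynomial (σ ⊕ τ) R)
    (H : β → MvPolynomial τ R)
    (hGH : ∀ q : MvPolynomial τ R, rename Sum.inr q ∈ Ideal.span (Set.range G) →
      ∃ b : R, b ≠ 0 ∧ C b * q ∈ Ideal.span (Set.range H)) :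
    ∃ g : R, g ≠ 0 ∧ ∀ e : R →+* K, Function.Surjective e → e g ≠ 0 →
      ∀ q : MvPolynomial τ K,
        rename Sum.inr q ∈ Ideal.span (Set.range fun i => map e (G i)) →
        q ∈ Ideal.span (Set.range fun i => map e (H i)) := by
  classical
  obtain ⟨m, hm⟩ := aux_elim_order σ τ
  set J := Ideal.span (Set.range G) with hJ
  obtain ⟨g1, hg1, hdiv⟩ := aux_div m J
  -- the elimination ideal is finitely generated
  set I : Ideal (MvPolynomial τ R) :=
    J.comap (rename Sum.inr : MvPolynomial τ R →ₐ[R] MvPolynomial (σ ⊕ τ) R).toRingHom with hI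
  obtain ⟨g2, hg2, hg2I⟩ : ∃ g2 : R, g2 ≠ 0 ∧ ∀ i ∈ I, C g2 * i ∈ Ideal.span (Set.range H) := by
    obtain ⟨S, hS⟩ := (isNoetherianRing_iff_ideal_fg _).1
      (inferInstance : IsNoetherianRing (MvPolynomial τ R)) I
    have hSI : ∀ q ∈ S, ∃ b : R, b ≠ 0 ∧ C b * q ∈ Ideal.span (Set.range H) := by
      intro q hq
      apply hGH
      have : q ∈ I := hS ▸ Ideal.subset_span hq
      exact this
    choose! b hb hbq using hSI
    refine ⟨∏ q ∈ S, b q, Finset.prod_ne_zero_iff.2 hb, ?_⟩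
    intro i hi
    rw [← hS] at hi
    induction hi using Submodule.span_induction with
    | mem x hx =>
      have hx : x ∈ S := hx
      rw [← Finset.prod_erase_mul _ _ hx, C_mul, mul_assoc]
      exact Ideal.mul_mem_left _ _ (hbq x hx)
    | zero => simp
    | add x y _ _ h1 h2 => rw [mul_add]; exact Ideal.add_mem _ h1 h2
    | smul a x _ h => 
      rw [smul_eq_mul, mul_left_comm]; exact Ideal.mul_mem_left _ _ h
  refine ⟨g1 * g2, mul_ne_zero hg1 hg2, ?_⟩
  intro e he heg q hq
  rw [map_mul] at heg
  have he1 : e g1 ≠ 0 := left_ne_zero_of_mul heg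
  have he2 : e g2 ≠ 0 := right_ne_zero_of_mul heg
  obtain ⟨q', rfl⟩ := map_surjective e he q
  have hspan : Ideal.span (Set.range fun i => map e (G i)) = J.map (map e) := by
    rw [hJ, Ideal.map_span, ← Set.range_comp]; rfl
  rw [hspan, ← map_rename, Ideal.mem_map_iff_of_surjective _ (map_surjective e he)] at hq
  obtain ⟨j0, hj0, hj0q⟩ := hq
  -- division of the error term
  obtain ⟨N, j, hj, v, hv, hv1, -, hv3⟩ := hdiv (RingHom.ker e)
    (m.toSyn (m.degree (rename Sum.inr q' - j0))) (rename Sum.inr q' - j0)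
    (fun a ha => m.le_degree ha) (fun a => by
      rw [RingHom.mem_ker, ← coeff_map, map_sub, hj0q, sub_self, coeff_zero])
  obtain ⟨M, j', hj', v', hv', hv1', hv2', -⟩ := hdiv ⊤
    (m.toSyn (m.degree (rename Sum.inr q'))) (rename Sum.inr q')
    (fun a ha => m.le_degree ha) (fun a => trivial)
  have hzero : C (g1 ^ N) * v' - C (g1 ^ M) * v = 0 := by
    by_contra hne
    have hmem : C (g1 ^ N) * v' - C (g1 ^ M) * v ∈ J := by
      have : C (g1 ^ N) * v' - C (g1 ^ M) * v = C (g1 ^ M) * C (g1 ^ N) * j0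
          - C (g1 ^ N) * j' + C (g1 ^ M) * j := by
        linear_combination (C (g1 ^ M)) * hv - (C (g1 ^ N)) * hv'
      rw [this]
      exact J.add_mem (J.sub_mem (J.mul_mem_left _ hj0) (J.mul_mem_left _ hj'))
        (J.mul_mem_left _ hj)
    have hsupp := m.degree_mem_support hne
    rcases Finset.mem_union.1 (MvPolynomial.support_sub _ _ _ hsupp) with h | h
    · refine hv1' _ ?_ _ hmem hne rfl
      rw [mem_support_iff, coeff_C_mul] at h
      exact mem_support_iff.2 (right_ne_zero_of_mul h)
    · refine hv1 _ ?_ _ hmem hne rfl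
      rw [mem_support_iff, coeff_C_mul] at h
      exact mem_support_iff.2 (right_ne_zero_of_mul h)
  have hv0 : map e v = 0 := by
    ext a; rw [coeff_map, coeff_zero]; exact hv3 a
  have hv'0 : map e v' = 0 := by
    have := congrArg (map e) hzero
    rw [map_sub, map_mul, map_mul, hv0, mul_zero, sub_zero, map_zero, map_C, map_pow] at this
    exact (mul_eq_zero.1 this).resolve_left (by simpa using fun h => absurd h he1)
  -- `v'` only involves the variables in `τ`
  have hv'τ : ∃ w : MvPolynomial τ R, rename Sum.inr w = v' := by
    rw [← Set.mem_range]
    have : v' ∈ supported R (Set.range (Sum.inr : τ → σ ⊕ τ)) := by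
      rw [mem_supported]
      intro i hi
      rw [Finset.mem_coe, mem_vars_iff_mem_support] at hi
      obtain ⟨a, ha, hia⟩ := hi
      rcases i with i | i
      · exfalso
        have h1 := hv2' a ha
        have h2 := hm _ _ h1 (fun k => by
          by_cases h0 : (rename Sum.inr q' : MvPolynomial (σ ⊕ τ) R) = 0
          · rw [h0]; simp
          · have := m.degree_mem_support h0
            rw [support_rename_of_injective Sum.inr_injective, Finset.mem_image] at this
            obtain ⟨c, -, hc⟩ := this
            rw [← hc]
            exact Finsupp.mapDomain_of_notMem_range _ _ (by simp)) i
        simp [h2] at hia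
      · exact ⟨i, rfl⟩
    rw [supported_eq_range_rename] at this
    obtain ⟨w, hw⟩ := this
    exact ⟨rename (Equiv.ofInjective _ Sum.inr_injective).symm w, by
      rw [← hw]; simp only [AlgHom.coe_toRingHom, AlgHom.toRingHom_eq_coe, rename_rename]
      congr 2
      funext ⟨x, y, hy⟩
      subst hy
      simp⟩
  obtain ⟨w, hw⟩ := hv'τ
  have hI' : C (g1 ^ M) * q' - w ∈ I := by
    change (rename Sum.inr) (C (g1 ^ M) * q' - w) ∈ J
    rw [map_sub, map_mul, rename_C, hw, hv', add_sub_cancel_right]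
    exact hj'
  have hfin := hg2I _ hI'
  have hspanH : Ideal.span (Set.range fun i => map e (H i))
      = (Ideal.span (Set.range H)).map (map e) := by
    rw [Ideal.map_span, ← Set.range_comp]; rfl
  have hfin2 := Ideal.mem_map_of_mem (map e) hfin
  rw [← hspanH] at hfin2
  have hw0 : map e w = 0 := by
    apply rename_injective _ (Sum.inr_injective (α := σ))
    rw [← map_rename, hw, hv'0, map_zero]
  rw [map_mul, map_sub, hw0, sub_zero, map_mul, map_C, map_C] at hfin2
  have hu : IsUnit (C (e g2) * C (e (g1 ^ M)) : MvPolynomial τ K) := by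
    rw [← C_mul]
    apply IsUnit.map
    rw [map_pow]
    exact (mul_ne_zero he2 (pow_ne_zero _ he1)).isUnit
  rw [← mul_assoc] at hfin2
  exact (Ideal.unit_mul_mem_iff_mem _ hu).1 hfin2


theorem aux_sepgen (F L : Type) [Field F] [Field L] [Algebra F L] [Algebra.EssFiniteType F L]
    (h : IsReduced (TensorProduct F (AlgebraicClosure F) L)) :
    ∃ s : Finset L, IsTranscendenceBasis F ((↑) : s → L) ∧
      Algebra.IsSeparable (IntermediateField.adjoin F (s : Set L)) L := by
  obtain ⟨p, hE⟩ := ExpChar.exists F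
  rcases hE with _ | hp
  · exact exists_isTranscendenceBasis_and_isSeparable_of_perfectField F L
  have hE : ExpChar F p := .prime hp
  refine exists_isTranscendenceBasis_and_isSeparable_of_linearIndepOn_pow_of_essFiniteType p hp ?_
  intro s hs
  have hs0 := hs
  have : ExpChar (AlgebraicClosure F) p := expChar_of_injective_algebraMap (algebraMap F _).injective p
  have : ExpChar (TensorProduct F (AlgebraicClosure F) L) p :=
    expChar_of_injective_algebraMap
      (algebraMap F (TensorProduct F (AlgebraicClosure F) L)).injective p
  rw [linearIndepOn_finset_iff] at hs ⊢
  intro c hc i hi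
  have : ∀ i, ∃ d : AlgebraicClosure F, d ^ p = algebraMap F _ (c i) := fun i =>
    IsAlgClosed.exists_pow_nat_eq _ hp.pos
  choose d hd using this
  have h0 : (∑ i ∈ s, d i ⊗ₜ[F] i) ^ p = 0 := by
    rw [sum_pow_char]
    have : ∀ i ∈ s, (d i ⊗ₜ[F] i) ^ p = (1 : AlgebraicClosure F) ⊗ₜ[F] (c i • i ^ p) := by
      intro i _
      rw [Algebra.TensorProduct.tmul_pow, hd, Algebra.algebraMap_eq_smul_one,
        TensorProduct.smul_tmul]
    rw [Finset.sum_congr rfl this, ← TensorProduct.tmul_sum, hc, TensorProduct.tmul_zero]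
  have h1 := eq_zero_of_pow_eq_zero h0
  let B := Module.Basis.extend hs0
  have hiB : i ∈ hs0.extend (Set.subset_univ _) := hs0.subset_extend _ hi
  have h2 := congrArg (TensorProduct.rid F (AlgebraicClosure F) ∘
    (LinearMap.lTensor (AlgebraicClosure F) (B.coord ⟨i, hiB⟩))) h1
  simp only [Function.comp, map_sum, LinearMap.lTensor_tmul, map_zero,
    TensorProduct.rid_tmul] at h2
  rw [Finset.sum_eq_single i] at h2
  · have : B.coord ⟨i, hiB⟩ i = 1 := by
      have h5 : B ⟨i, hiB⟩ = i := Module.Basis.extend_apply_self _ _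
      have h4 := B.repr_self ⟨i, hiB⟩
      rw [h5] at h4
      rw [Module.Basis.coord_apply, h4, Finsupp.single_eq_same]
    rw [this, one_smul] at h2
    have h3 := hd i
    rw [h2, zero_pow hp.ne_zero, eq_comm, map_eq_zero] at h3
    exact h3
  · intro j hj hji
    have hjB : j ∈ hs0.extend (Set.subset_univ _) := hs0.subset_extend _ hj
    have : B.coord ⟨i, hiB⟩ j = 0 := by
      have h5 : B ⟨j, hjB⟩ = j := Module.Basis.extend_apply_self _ _
      have h4 := B.repr_self ⟨j, hjB⟩
      rw [h5] at h4
      rw [Module.Basis.coord_apply, h4, Finsupp.single_eq_of_ne (by simpa using Ne.symm hji)]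
    rw [this, zero_smul]
  · exact fun h => absurd hi h

theorem aux_krull_le {A B : Type} [CommRing A] [CommRing B] [Algebra A B] [Algebra.IsIntegral A B]
    : ringKrullDim B ≤ ringKrullDim A := by
  refine Order.krullDim_le_of_strictMono (fun I => ⟨Ideal.comap (algebraMap A B) I.asIdeal, inferInstance⟩) ?_
  intro I J h
  exact Ideal.IsIntegral.comap_lt_comap h

theorem aux_krull_ge {A B : Type} [CommRing A] [CommRing B] [Algebra A B] [Algebra.IsIntegral A B]
    (hinj : Function.Injective (algebraMap A B)) : ringKrullDim A ≤ ringKrullDim B := by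
  have key : ∀ (n : ℕ) (l : LTSeries (PrimeSpectrum A)), l.length = n → ∃ l' : LTSeries (PrimeSpectrum B),
      l'.length = n ∧ l'.last.comap (algebraMap A B) = l.last := by
    intro n
    induction n with
    | zero =>
      intro l hl
      obtain ⟨Q, -, hQ, hQ'⟩ := Ideal.exists_ideal_over_prime_of_isIntegral (S := B) l.last.asIdeal ⊥ (by
        rw [← RingHom.ker_eq_comap_bot, (RingHom.injective_iff_ker_eq_bot _).1 hinj]; exact bot_le)
      exact ⟨RelSeries.singleton _ ⟨Q, hQ⟩, rfl, by ext1; exact hQ'⟩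
    | succ n ih =>
      intro l hl
      obtain ⟨l', h1, h2⟩ := ih l.eraseLast (by simp [hl])
      have hlt : l.eraseLast.last < l.last := l.eraseLast_last_rel_last (by omega)
      obtain ⟨Q, hQ1, hQ, hQ'⟩ := Ideal.exists_ideal_over_prime_of_isIntegral (S := B) l.last.asIdeal
        l'.last.asIdeal (by
          have : l'.last.comap (algebraMap A B) ≤ l.last := h2 ▸ hlt.le
          exact this)
      have hlt' : l'.last < ⟨Q, hQ⟩ := by
        refine lt_of_le_of_ne hQ1 ?_
        intro h
        rw [← h2, h] at hlt
        refine hlt.ne ?_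
        ext1; exact hQ'
      exact ⟨l'.snoc ⟨Q, hQ⟩ hlt', by simp [h1], by ext1; simpa using hQ'⟩
  refine iSup_le fun l => ?_
  obtain ⟨l', h, -⟩ := key _ l rfl
  rw [← h]
  exact le_iSup (fun l : LTSeries (PrimeSpectrum B) => (l.length : WithBot ℕ∞)) l'

theorem aux_krull {F A : Type} [Field F] [CommRing A] (m : ℕ) (κ : MvPolynomial (Fin m) F →+* A)
    (hinj : Function.Injective κ) (hintegral : κ.IsIntegral) : ringKrullDim A = m := by
  algebraize [κ]
  have e : ringKrullDim A = ringKrullDim (MvPolynomial (Fin m) F) :=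
    le_antisymm aux_krull_le (aux_krull_ge hinj)
  rw [e, MvPolynomial.ringKrullDim_of_isNoetherianRing, ringKrullDim_eq_zero_of_field]
  simp


theorem aux_gauss {S L : Type} [CommRing S] [IsDomain S] [UniqueFactorizationMonoid S] [Field L]
    (φ : S →+* L) (hφ : Function.Injective φ) (z : L)
    (hz : ∃ g : Polynomial S, g ≠ 0 ∧ g.eval₂ φ z = 0) :
    ∃ f : Polynomial S, Irreducible f ∧ 0 < f.natDegree ∧ ∀ g, g.eval₂ φ z = 0 ↔ f ∣ g := by
  obtain ⟨g0, hg0, hg0z⟩ := hz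
  set 𝔮 : Ideal (Polynomial S) := RingHom.ker (Polynomial.eval₂RingHom φ z) with h𝔮
  have hmem : ∀ g, g ∈ 𝔮 ↔ g.eval₂ φ z = 0 := fun g => Iff.rfl
  have hp : 𝔮.IsPrime := RingHom.ker_isPrime _
  obtain ⟨f, hf, hfp⟩ := Ideal.IsPrime.exists_mem_prime_of_ne_bot hp
    (fun h => hg0 (by have : g0 ∈ 𝔮 := hg0z; rw [h] at this; exact this))
  have hC : ∀ b : S, b ≠ 0 → Polynomial.C b ∉ 𝔮 := by
    intro b hb h
    rw [hmem, Polynomial.eval₂_C] at h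
    exact hb (hφ (by rw [h, map_zero]))
  have hdeg : 0 < f.natDegree := by
    by_contra h
    have h0 : f.natDegree = 0 := by omega
    rw [Polynomial.eq_C_of_natDegree_eq_zero h0] at hf
    refine hC _ ?_ hf
    intro h1
    rw [Polynomial.eq_C_of_natDegree_eq_zero h0, h1, map_zero] at hfp
    exact hfp.ne_zero rfl
  refine ⟨f, hfp.irreducible, hdeg, fun g => ⟨fun hg => ?_, ?_⟩⟩
  · let Q := FractionRing S
    have hprim : f.IsPrimitive := hfp.irreducible.isPrimitive hdeg.ne'
    have hirr : Irreducible (f.map (algebraMap S Q)) :=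
      (hprim.irreducible_iff_irreducible_map_fraction_map (K := Q)).1 hfp.irreducible
    let ψ : Q →+* L := IsFractionRing.lift hφ
    let _ : Algebra Q L := ψ.toAlgebra
    have hψ : ∀ h : Polynomial S, Polynomial.aeval z (h.map (algebraMap S Q)) = h.eval₂ φ z := by
      intro h
      rw [Polynomial.aeval_def, Polynomial.eval₂_map]
      congr 1
      ext a
      exact IsFractionRing.lift_algebraMap hφ a
    have h1 : minpoly Q z ∣ f.map (algebraMap S Q) := minpoly.dvd _ _ (by rw [hψ]; exact hf)
    have h2 : minpoly Q z ∣ g.map (algebraMap S Q) := minpoly.dvd _ _ (by rw [hψ]; exact hg)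
    have h3 : f.map (algebraMap S Q) ∣ g.map (algebraMap S Q) :=
      ((hirr.dvd_iff.1 h1).resolve_left (minpoly.not_isUnit _ _)).dvd.trans h2
    obtain ⟨k, hk⟩ := h3
    obtain ⟨b, hbS, hb⟩ := IsLocalization.integerNormalization_spec (nonZeroDivisors S) k
    have h4 : Polynomial.C b * g = f * IsLocalization.integerNormalization (nonZeroDivisors S) k := by
      apply Polynomial.map_injective _ (IsFractionRing.injective S Q)
      rw [Polynomial.map_mul, Polynomial.map_mul, hb, hk, Polynomial.map_C, mul_smul_comm,
        ← Polynomial.smul_eq_C_mul, algebraMap_smul]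
    have h5 : f ∣ Polynomial.C b * g := ⟨_, h4⟩
    refine (hfp.dvd_or_dvd h5).resolve_left ?_
    intro h6
    exact hC _ (nonZeroDivisors.ne_zero hbS) (𝔮.mem_of_dvd h6 hf)
  · rintro ⟨k, rfl⟩
    rw [Polynomial.eval₂_mul, show f.eval₂ φ z = 0 from hf, zero_mul]

theorem aux_FT (F L : Type) [Field F] [Field L] [Algebra F L] [Algebra.EssFiniteType F L]
    (h : ∃ s : Finset L, IsTranscendenceBasis F ((↑) : s → L) ∧
      Algebra.IsSeparable (IntermediateField.adjoin F (s : Set L)) L) :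
    ∃ (n : ℕ) (θ : MvPolynomial (Fin (n + 1)) F →ₐ[F] L) (f : MvPolynomial (Fin (n + 1)) F),
      Irreducible f ∧ 0 < degreeOf 0 f ∧ (∀ g, θ g = 0 ↔ f ∣ g) ∧
      (∀ c : MvPolynomial (Fin n) F, θ (rename Fin.succ c) = 0 → c = 0) ∧ 
      ∀ y : L, ∃ c : MvPolynomial (Fin n) F, c ≠ 0 ∧ ∃ u, θ (rename Fin.succ c) * y = θ u := by
  obtain ⟨s, hs, hsep⟩ := h
  have hs2 := hs.comp_equiv s.equivFin.symm
  set n := s.card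
  set x : Fin n → L := ((↑) : s → L) ∘ s.equivFin.symm with hx
  have hrange : (s : Set L) = Set.range x := by
    rw [hx, Set.range_comp, s.equivFin.symm.range_eq_univ]; simp
  rw [hrange] at hsep
  set E := IntermediateField.adjoin F (Set.range x) with hE
  have : Algebra.EssFiniteType E L := Algebra.EssFiniteType.of_comp F E L
  have : Module.Finite E L := Algebra.finite_of_essFiniteType_of_isAlgebraic
  obtain ⟨z, hz⟩ := Field.exists_primitive_element E L
  let φ : MvPolynomial (Fin n) F →+* L := (aeval x).toRingHom
  have hφ : Function.Injective φ := hs2.1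
  have clear : ∀ p : Polynomial E, ∃ c : MvPolynomial (Fin n) F, c ≠ 0 ∧
      ∃ u : Polynomial (MvPolynomial (Fin n) F),
        u.map φ = Polynomial.C (φ c) * p.map (algebraMap E L) := by
    intro p
    induction p using Polynomial.induction_on' with
    | add p q hp hq =>
      obtain ⟨c, hc, u, hu⟩ := hp
      obtain ⟨c', hc', u', hu'⟩ := hq
      refine ⟨c * c', mul_ne_zero hc hc', Polynomial.C c' * u + Polynomial.C c * u', ?_⟩
      simp only [Polynomial.map_add, Polynomial.map_mul, Polynomial.map_C, hu, hu', map_mul]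
      ring
    | monomial k a =>
      obtain ⟨r, c, hrc⟩ := IntermediateField.mem_adjoin_range_iff F x a.1 |>.1 a.2
      by_cases hc : c = 0
      · refine ⟨1, one_ne_zero, 0, ?_⟩
        have : a = 0 := by
          apply Subtype.ext; rw [hrc, hc]; simp
        simp [this]
      · refine ⟨c, hc, Polynomial.monomial k r, ?_⟩
        have hc0 : φ c ≠ 0 := fun h => hc (hφ (by rw [h, map_zero]))
        rw [Polynomial.map_monomial, Polynomial.map_monomial, Polynomial.C_mul_monomial]
        congr 1
        change φ r = φ c * a.1
        rw [hrc]
        exact (mul_div_cancel₀ _ hc0).symm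
  have hzint : IsIntegral E z := Algebra.IsIntegral.isIntegral z
  obtain ⟨f, hf, hfd, hfz⟩ := aux_gauss φ hφ z (by
    obtain ⟨c, hc, u, hu⟩ := clear (minpoly E z)
    have hc0 : φ c ≠ 0 := fun h => hc (hφ (by rw [h, map_zero]))
    refine ⟨u, ?_, ?_⟩
    · rintro rfl
      rw [Polynomial.map_zero] at hu
      refine mul_ne_zero (by simpa using hc0) ?_ hu.symm
      exact (Polynomial.map_ne_zero_iff (algebraMap E L).injective).2 (minpoly.ne_zero hzint)
    · rw [← Polynomial.eval_map, hu, Polynomial.eval_mul, Polynomial.eval_map,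
        ← Polynomial.aeval_def, minpoly.aeval, mul_zero])
  have hθ : ∀ g, aeval (Fin.cons z x : Fin (n + 1) → L) g = (finSuccEquiv F n g).eval₂ φ z := by
    intro g
    induction g using MvPolynomial.induction_on with
    | C a => simp [finSuccEquiv_apply, φ]
    | add p q hp hq => simp only [map_add, hp, hq, Polynomial.eval₂_add]
    | mul_X p i hp =>
      simp only [map_mul, hp, Polynomial.eval₂_mul]
      congr 1
      refine Fin.cases ?_ (fun j => ?_) i
      · simp [finSuccEquiv_X_zero]
      · simp [finSuccEquiv_X_succ, φ]
  have hθs : ∀ c : MvPolynomial (Fin n) F,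
      aeval (Fin.cons z x : Fin (n + 1) → L) (rename Fin.succ c) = φ c := by
    intro c
    rw [aeval_rename]; rfl
  refine ⟨n, aeval (Fin.cons z x : Fin (n + 1) → L), (finSuccEquiv F n).symm f, ?_, ?_, ?_, ?_, ?_⟩
  · exact (MulEquiv.irreducible_iff (finSuccEquiv F n).symm).2 hf
  · rw [← natDegree_finSuccEquiv, AlgEquiv.apply_symm_apply]; exact hfd
  · intro g
    rw [hθ, hfz]
    constructor
    · intro h; simpa using map_dvd (finSuccEquiv F n).symm h
    · intro h; simpa using map_dvd (finSuccEquiv F n) h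
  · intro c hc
    rw [hθs] at hc
    exact hφ (by rw [hc, map_zero])
  · intro y
    have hy : y ∈ IntermediateField.adjoin E {z} := by rw [hz]; trivial
    rw [← IntermediateField.mem_toSubalgebra,
      IntermediateField.adjoin_simple_toSubalgebra_of_isAlgebraic hzint.isAlgebraic, Algebra.adjoin_singleton_eq_range_aeval] at hy
    obtain ⟨p, rfl⟩ := hy
    obtain ⟨c, hc, u, hu⟩ := clear p
    refine ⟨c, hc, (finSuccEquiv F n).symm u, ?_⟩
    rw [hθs, hθ, AlgEquiv.apply_symm_apply, ← Polynomial.eval_map, hu, Polynomial.eval_mul,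
      Polynomial.eval_C, Polynomial.eval_map]; rfl


theorem aux_clear {R F ν : Type} [CommRing R] [IsDomain R] [Field F] [Algebra R F]
    [IsFractionRing R F] (a : MvPolynomial ν F) :
    ∃ b : R, b ≠ 0 ∧ ∃ a' : MvPolynomial ν R,
      map (algebraMap R F) a' = C (algebraMap R F b) * a := by
  induction a using MvPolynomial.induction_on' with
  | monomial m a =>
    obtain ⟨x, b, hb, rfl⟩ := IsFractionRing.div_surjective (A := R) a
    refine ⟨b, nonZeroDivisors.ne_zero hb, monomial m x, ?_⟩
    rw [map_monomial, C_mul_monomial, mul_div_cancel₀]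
    simpa using nonZeroDivisors.ne_zero hb
  | add p q hp hq =>
    obtain ⟨b, hb, p', hp'⟩ := hp
    obtain ⟨c, hc, q', hq'⟩ := hq
    refine ⟨b * c, mul_ne_zero hb hc, C c * p' + C b * q', ?_⟩
    simp only [map_add, map_mul, map_C, hp', hq']
    ring

theorem aux_clear_fam {R F ν κ : Type} [CommRing R] [IsDomain R] [Field F] [Algebra R F]
    [IsFractionRing R F] [Finite κ] (a : κ → MvPolynomial ν F) :
    ∃ b : R, b ≠ 0 ∧ ∃ a' : κ → MvPolynomial ν R,
      ∀ i, map (algebraMap R F) (a' i) = C (algebraMap R F b) * a i := by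
  classical
  cases nonempty_fintype κ
  choose b hb a' ha' using fun i => aux_clear (R := R) (a i)
  refine ⟨∏ i, b i, Finset.prod_ne_zero_iff.2 fun i _ => hb i,
    fun i => C (∏ j ∈ Finset.univ.erase i, b j) * a' i, fun i => ?_⟩
  rw [map_mul, map_C, ha', ← mul_assoc, ← C_mul, ← map_mul,
    Finset.prod_erase_mul _ _ (Finset.mem_univ i)]

theorem aux_spread {R F ν α : Type} [CommRing R] [IsDomain R] [Field F] [Algebra R F]
    [IsFractionRing R F] (G : α → MvPolynomial ν R) (q : MvPolynomial ν R)
    (hq : map (algebraMap R F) q ∈ Ideal.span (Set.range fun i => map (algebraMap R F) (G i))) :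
    ∃ b : R, b ≠ 0 ∧ C b * q ∈ Ideal.span (Set.range G) := by
  have key : ∀ x ∈ Ideal.span (Set.range fun i => map (algebraMap R F) (G i)),
      ∃ b : R, b ≠ 0 ∧ ∃ w ∈ Ideal.span (Set.range G),
        map (algebraMap R F) w = C (algebraMap R F b) * x := by
    intro x hx
    induction hx using Submodule.span_induction with
    | mem x hx =>
      obtain ⟨i, rfl⟩ := hx
      exact ⟨1, one_ne_zero, G i, Ideal.subset_span ⟨i, rfl⟩, by simp⟩
    | zero => exact ⟨1, one_ne_zero, 0, Ideal.zero_mem _, by simp⟩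
    | add x y _ _ h1 h2 =>
      obtain ⟨b, hb, p', hp, hp'⟩ := h1
      obtain ⟨c, hc, q', hq, hq'⟩ := h2
      refine ⟨b * c, mul_ne_zero hb hc, C c * p' + C b * q',
        Ideal.add_mem _ (Ideal.mul_mem_left _ _ hp) (Ideal.mul_mem_left _ _ hq), ?_⟩
      simp only [map_add, map_mul, map_C, hp', hq']
      ring
    | smul a x _ h =>
      obtain ⟨b, hb, p', hp, hp'⟩ := h
      obtain ⟨c, hc, a', ha'⟩ := aux_clear (R := R) a
      refine ⟨b * c, mul_ne_zero hb hc, a' * p', Ideal.mul_mem_left _ _ hp, ?_⟩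
      simp only [map_mul, hp', ha', smul_eq_mul]
      ring
  obtain ⟨b, hb, w, hw, h⟩ := key _ hq
  refine ⟨b, hb, ?_⟩
  have : w = C b * q := by
    apply map_injective _ (IsFractionRing.injective R F)
    rw [h, map_mul, map_C]
  exact this ▸ hw

theorem aux_map_span {R S ν α : Type} [CommRing R] [CommRing S] (e : R →+* S)
    (G : α → MvPolynomial ν R) {q : MvPolynomial ν R} (hq : q ∈ Ideal.span (Set.range G)) :
    map e q ∈ Ideal.span (Set.range fun i => map e (G i)) := by
  have := Ideal.mem_map_of_mem (map e) hq
  rwa [Ideal.map_span, ← Set.range_comp] at this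

/-- the generators of the graph ideal -/
def auxG {R ι κ : Type} [CommRing R] (f c : MvPolynomial ι R) (u : κ → MvPolynomial ι R) :
    Option (Option κ) → MvPolynomial (Option ι ⊕ κ) R
  | none => rename (Sum.inl ∘ some) f
  | some none => rename (Sum.inl ∘ some) c * X (Sum.inl none) - 1
  | some (some j) => X (Sum.inr j) - rename (Sum.inl ∘ some) (u j) * X (Sum.inl none)

theorem auxG_map {R S ι κ : Type} [CommRing R] [CommRing S] (e : R →+* S)
    (f c : MvPolynomial ι R) (u : κ → MvPolynomial ι R) (i : Option (Option κ)) :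
    map e (auxG f c u i) = auxG (map e f) (map e c) (fun j => map e (u j)) i := by
  rcases i with _ | _ | j <;> simp [auxG, map_rename]

theorem aux_HL {k M ι κ : Type} [Field k] [Field M] [Algebra k M]
    (θ : MvPolynomial ι k →ₐ[k] M) (f c : MvPolynomial ι k) (u : κ → MvPolynomial ι k)
    (y : κ → M) (hf : ∀ g, θ g = 0 ↔ f ∣ g) (hc : θ c ≠ 0) (hy : ∀ j, θ c * y j = θ (u j))
    (q : MvPolynomial κ k) :
    aeval y q = 0 ↔ rename Sum.inr q ∈ Ideal.span (Set.range (auxG f c u)) := by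
  set I := Ideal.span (Set.range (auxG f c u)) with hI
  let ev : MvPolynomial (Option ι ⊕ κ) k →ₐ[k] M :=
    aeval (Sum.elim (fun o => o.elim (θ c)⁻¹ (fun i => θ (X i))) y)
  have hev1 : ∀ h, ev (rename (Sum.inl ∘ some) h) = θ h := by
    intro h
    simp only [ev, aeval_rename]
    conv_rhs => rw [aeval_unique θ]
    rfl
  have hev2 : ∀ h, ev (rename Sum.inr h) = aeval y h := by
    intro h
    simp only [ev, aeval_rename]
    rfl
  have hevn : ev (X (Sum.inl none)) = (θ c)⁻¹ := by simp [ev]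
  have hevY : ∀ j, ev (X (Sum.inr j)) = y j := by simp [ev]
  have hevI : ∀ h ∈ I, ev h = 0 := by
    intro h hh
    have : I ≤ RingHom.ker ev := by
      rw [hI, Ideal.span_le]
      rintro _ ⟨i, rfl⟩
      change ev _ = 0
      rcases i with _ | _ | j
      · simp only [auxG, hev1]; exact (hf f).2 dvd_rfl
      · simp only [auxG, map_sub, map_mul, hev1, hevn, map_one, mul_inv_cancel₀ hc, sub_self]
      · simp only [auxG, map_sub, map_mul, hev1, hevn, hevY, ← hy]
        field_simp
        simp
    exact this hh
  refine ⟨fun hq => ?_, fun hq => by rw [← hev2]; exact hevI _ hq⟩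
  have hmk : ∀ i, Ideal.Quotient.mk I (auxG f c u i) = 0 := fun i =>
    Ideal.Quotient.eq_zero_iff_mem.2 (Ideal.subset_span ⟨i, rfl⟩)
  have h1 := hmk none
  have h2 := hmk (some none)
  have h3 := fun j => hmk (some (some j))
  simp only [auxG, map_sub, map_mul, map_one, sub_eq_zero] at h1 h2 h3
  have claim : ∀ q : MvPolynomial κ k, ∃ (N : ℕ) (h : MvPolynomial ι k),
      Ideal.Quotient.mk I (rename (Sum.inl ∘ some) c) ^ N * Ideal.Quotient.mk I (rename Sum.inr q)
        = Ideal.Quotient.mk I (rename (Sum.inl ∘ some) h) := by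
    intro q
    induction q using MvPolynomial.induction_on with
    | C a => exact ⟨0, C a, by simp⟩
    | add p q hp hq =>
      obtain ⟨N, h, hh⟩ := hp
      obtain ⟨N', h', hh'⟩ := hq
      refine ⟨N + N', c ^ N' * h + c ^ N * h', ?_⟩
      simp only [map_add, map_mul, map_pow, ← hh, ← hh']
      ring
    | mul_X p j hp =>
      obtain ⟨N, h, hh⟩ := hp
      refine ⟨N + 1, h * u j, ?_⟩
      simp only [map_mul, ← hh, rename_X, h3]
      linear_combination (Ideal.Quotient.mk I (rename (Sum.inl ∘ some) c) ^ N *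
        Ideal.Quotient.mk I (rename Sum.inr p) *
          Ideal.Quotient.mk I (rename (Sum.inl ∘ some) (u j))) * h2
  obtain ⟨N, h, hh⟩ := claim q
  have h0 : θ h = 0 := by
    rw [← map_pow, ← map_mul, Ideal.Quotient.eq] at hh
    have := hevI _ hh
    rw [map_sub, map_mul, hev2, hq, mul_zero, zero_sub, neg_eq_zero, hev1] at this
    exact this
  obtain ⟨w, rfl⟩ := (hf h).1 h0
  rw [map_mul, map_mul, h1, zero_mul] at hh
  rw [← Ideal.Quotient.eq_zero_iff_mem]
  have hu : IsUnit (Ideal.Quotient.mk I (rename (Sum.inl ∘ some) c)) := IsUnit.of_mul_eq_one _ h2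
  exact (hu.pow N).mul_right_eq_zero.1 hh

theorem aux_finSucc_rename {k : Type} [Field k] {n : ℕ} (c : MvPolynomial (Fin n) k) :
    finSuccEquiv k n (rename Fin.succ c) = Polynomial.C c := by
  induction c using MvPolynomial.induction_on with
  | C a => simp [finSuccEquiv_apply]
  | add p q hp hq => rw [map_add, map_add, hp, hq, map_add]
  | mul_X p i hp => rw [map_mul, map_mul, hp, rename_X, finSuccEquiv_X_succ, map_mul]

theorem aux_not_dvd {k : Type} [Field k] {n : ℕ} (f : MvPolynomial (Fin (n + 1)) k)
    (hf : 0 < degreeOf 0 f) (c : MvPolynomial (Fin n) k) (hc : c ≠ 0) :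
    ¬ f ∣ rename Fin.succ c := by
  intro h
  have h1 := map_dvd (finSuccEquiv k n) h
  rw [aux_finSucc_rename] at h1
  have h2 := Polynomial.natDegree_le_of_dvd h1 (by simpa using hc)
  rw [natDegree_finSuccEquiv, Polynomial.natDegree_C] at h2
  omega

theorem aux_unit_cancel {K ν : Type} [Field K] {I : Ideal (MvPolynomial ν K)} {a : K} (ha : a ≠ 0)
    {q : MvPolynomial ν K} (h : C a * q ∈ I) : q ∈ I :=
  (Ideal.unit_mul_mem_iff_mem _ ((ha.isUnit).map C)).1 h

theorem aux_prime {R F K : Type} [CommRing R] [IsDomain R] [IsNoetherianRing R] [Field F]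
    [Algebra R F] [IsFractionRing R F] [Field K] {l s : ℕ}
    (P : Fin l → MvPolynomial (Fin s) R)
    (hprime : (Ideal.span (Set.range fun i => map (algebraMap R F) (P i))).IsPrime)
    (hsep : IsReduced (AlgebraicClosure F ⊗[F] (FractionRing (MvPolynomial (Fin s) F ⧸
      Ideal.span (Set.range fun i => map (algebraMap R F) (P i)))))) :
    ∃ (n : ℕ) (f : MvPolynomial (Fin n) R), Irreducible (map (algebraMap R F) f) ∧
      ∃ g : R, g ≠ 0 ∧ ∀ e : R →+* K, Function.Surjective e → e g ≠ 0 →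
        Irreducible (map e f) → (Ideal.span (Set.range fun i => map e (P i))).IsPrime := by
  classical
  have hinj : Function.Injective (algebraMap R F) := IsFractionRing.injective R F
  set p := Ideal.span (Set.range fun i => map (algebraMap R F) (P i)) with hp
  let A := MvPolynomial (Fin s) F ⧸ p
  let L := FractionRing A
  have : Algebra.EssFiniteType A L := Algebra.EssFiniteType.of_isLocalization _ (nonZeroDivisors A)
  have : Algebra.EssFiniteType F L := Algebra.EssFiniteType.comp F A L
  obtain ⟨n, θ, f0, hf0, hf0d, hf0θ, hθs, hθ⟩ := aux_FT F L (aux_sepgen F L hsep)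
  let y : Fin s → L := fun j => algebraMap A L (Ideal.Quotient.mk p (X j))
  have hy : ∀ q : MvPolynomial (Fin s) F, aeval y q = 0 ↔ q ∈ p := by
    intro q
    have : aeval y q = algebraMap A L (Ideal.Quotient.mk p q) := by
      have h1 : ((IsScalarTower.toAlgHom F A L).comp (Ideal.Quotient.mkₐ F p)) = aeval y := by
        ext j; simp [y]; rfl
      rw [← h1]; rfl
    rw [this, ← Ideal.Quotient.eq_zero_iff_mem]
    exact map_eq_zero_iff _ (IsFractionRing.injective A L)
  choose c0 hc0 u0 hu0 using fun j => hθ (y j)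
  -- common denominator
  obtain ⟨c1, hc1, u1, hu1⟩ : ∃ c1 : MvPolynomial (Fin n) F, c1 ≠ 0 ∧
      ∃ u1 : Fin s → MvPolynomial (Fin (n + 1)) F, ∀ j,
        θ (rename Fin.succ c1) * y j = θ (u1 j) := by
    refine ⟨∏ j, c0 j, Finset.prod_ne_zero_iff.2 fun j _ => hc0 j,
      fun j => rename Fin.succ (∏ i ∈ Finset.univ.erase j, c0 i) * u0 j, fun j => ?_⟩
    rw [map_mul θ, ← hu0, ← mul_assoc, ← map_mul, ← map_mul,
      Finset.prod_erase_mul _ _ (Finset.mem_univ j)]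
  obtain ⟨bf, hbf, f, hf⟩ := aux_clear (R := R) f0
  obtain ⟨bc, hbc, c2, hc2⟩ := aux_clear (R := R) c1
  obtain ⟨bu, hbu, u2, hu2⟩ := aux_clear_fam (R := R) u1
  set c : MvPolynomial (Fin n) R := C bu * c2 with hc
  set u : Fin s → MvPolynomial (Fin (n + 1)) R := fun j => C bc * u2 j with hu
  have hmc : map (algebraMap R F) c = C (algebraMap R F (bu * bc)) * c1 := by
    rw [hc, map_mul, map_C, hc2, ← mul_assoc, ← C_mul, ← map_mul]
  have hmu : ∀ j, map (algebraMap R F) (u j) = C (algebraMap R F (bu * bc)) * u1 j := by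
    intro j
    rw [hu, map_mul, map_C, hu2, ← mul_assoc, ← C_mul, ← map_mul, mul_comm bc]
  have hnz : ∀ b : R, b ≠ 0 → algebraMap R F b ≠ 0 := fun b hb => by simpa using hb
  have hmc0 : map (algebraMap R F) c ≠ 0 := by
    rw [hmc]
    exact mul_ne_zero (by simpa using ⟨hbu, hbc⟩) hc1
  have hassoc : Associated (map (algebraMap R F) f) f0 := by
    rw [hf]
    exact (associated_unit_mul_left _ _ ((hnz _ hbf).isUnit.map C))
  have hfirr : Irreducible (map (algebraMap R F) f) := hassoc.irreducible_iff.2 hf0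
  have hfθ : ∀ g, θ g = 0 ↔ map (algebraMap R F) f ∣ g := fun g => by
    rw [hf0θ, hassoc.dvd_iff_dvd_left]
  have hcθ : θ (map (algebraMap R F) (rename Fin.succ c)) ≠ 0 := by
    rw [map_rename]
    exact fun h => hmc0 (hθs _ h)
  have hyθ : ∀ j, θ (map (algebraMap R F) (rename Fin.succ c)) * y j
      = θ (map (algebraMap R F) (u j)) := by
    intro j
    rw [hmu, map_rename, hmc, map_mul (rename Fin.succ), rename_C, map_mul θ, map_mul θ, mul_assoc, hu1]
  have HLF := aux_HL θ _ _ (fun j => map (algebraMap R F) (u j)) y hfθ hcθ hyθ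
  set G := auxG f (rename Fin.succ c) u with hG
  have hGF : Set.range (auxG (map (algebraMap R F) f) (map (algebraMap R F) (rename Fin.succ c))
      (fun j => map (algebraMap R F) (u j))) = Set.range fun i => map (algebraMap R F) (G i) := by
    congr 1; funext i; rw [hG, auxG_map]
  rw [hGF] at HLF
  obtain ⟨g1, hg1, hEL⟩ := aux_elim (K := K) G P (by
    intro q hq
    have h1 := aux_map_span (algebraMap R F) G hq
    rw [map_rename, ← HLF, hy] at h1
    exact aux_spread P q h1)
  have hPG : ∀ i, ∃ b : R, b ≠ 0 ∧ C b * rename Sum.inr (P i) ∈ Ideal.span (Set.range G) := by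
    intro i
    apply aux_spread (F := F)
    rw [map_rename, ← HLF, hy]
    exact Ideal.subset_span ⟨i, rfl⟩
  choose b hb hbG using hPG
  obtain ⟨m, hm, hm0⟩ : ∃ m : Fin (n + 1) →₀ ℕ, f.coeff m ≠ 0 ∧ 0 < m 0 := by
    by_contra hcon
    push Not at hcon
    have : degreeOf 0 f0 ≤ 0 := by
      rw [degreeOf_le_iff]
      intro m hm
      apply hcon
      intro h0
      have h1 := congrArg (coeff m) hf
      rw [coeff_map, h0, map_zero, coeff_C_mul, eq_comm, mul_eq_zero] at h1
      exact h1.elim (hnz _ hbf) (mem_support_iff.1 hm)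
    omega
  obtain ⟨m', hm'⟩ : ∃ m', c.coeff m' ≠ 0 := by
    have : c ≠ 0 := fun h => hmc0 (by rw [h, map_zero])
    simpa [MvPolynomial.ext_iff] using this
  refine ⟨n + 1, f, hfirr, g1 * (∏ i, b i) * f.coeff m * c.coeff m',
    mul_ne_zero (mul_ne_zero (mul_ne_zero hg1 (Finset.prod_ne_zero_iff.2 fun i _ => hb i)) hm) hm',
    ?_⟩
  intro e he heg hirr
  simp only [map_mul, map_prod, mul_ne_zero_iff, Finset.prod_ne_zero_iff, Finset.mem_univ,
    true_imp_iff] at heg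
  obtain ⟨⟨⟨he1, heb⟩, hem⟩, hem'⟩ := heg
  have hdt : 0 < degreeOf 0 (map e f) := by
    refine lt_of_lt_of_le hm0 (monomial_le_degreeOf 0 ?_)
    rw [mem_support_iff, coeff_map]; exact hem
  have hct : map e c ≠ 0 := fun h => hem' (by rw [← coeff_map, h, coeff_zero])
  have hndvd := aux_not_dvd _ hdt _ hct
  have hpt : (Ideal.span {map e f}).IsPrime :=
    (Ideal.span_singleton_prime hirr.ne_zero).2 hirr.prime
  let At := MvPolynomial (Fin (n + 1)) K ⧸ Ideal.span {map e f}
  let M := FractionRing At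
  let θt : MvPolynomial (Fin (n + 1)) K →ₐ[K] M :=
    (IsScalarTower.toAlgHom K At M).comp (Ideal.Quotient.mkₐ K _)
  have hθt : ∀ g, θt g = 0 ↔ map e f ∣ g := by
    intro g
    rw [← Ideal.mem_span_singleton, ← Ideal.Quotient.eq_zero_iff_mem]
    exact map_eq_zero_iff (algebraMap At M) (IsFractionRing.injective At M)
  have hcθt : θt (map e (rename Fin.succ c)) ≠ 0 := by
    rw [map_rename, Ne, hθt]; exact hndvd
  let yt : Fin s → M := fun j => θt (map e (u j)) / θt (map e (rename Fin.succ c))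
  have HLt := aux_HL θt _ _ (fun j => map e (u j)) yt hθt hcθt
    (fun j => mul_div_cancel₀ _ hcθt)
  have hGt : Set.range (auxG (map e f) (map e (rename Fin.succ c))
      (fun j => map e (u j))) = Set.range fun i => map e (G i) := by
    congr 1; funext i; rw [hG, auxG_map]
  rw [hGt] at HLt
  have hker : Ideal.span (Set.range fun i => map e (P i))
      = RingHom.ker (aeval yt : MvPolynomial (Fin s) K →ₐ[K] M) := by
    apply le_antisymm
    · rw [Ideal.span_le]
      rintro _ ⟨i, rfl⟩
      change aeval yt (map e (P i)) = 0
      rw [HLt]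
      have h1 := aux_map_span e G (hbG i)
      rw [map_mul, map_C, map_rename] at h1
      exact aux_unit_cancel (heb i) h1
    · intro q hq
      exact hEL e he he1 q ((HLt q).1 hq)
  rw [hker]
  exact RingHom.ker_isPrime _

/-- generators of the ideal of the graph of a Noether normalization -/
def auxD {R η μ α : Type} [CommRing R] (P : α → MvPolynomial η R) (b : R)
    (w : μ → MvPolynomial η R) : α ⊕ μ → MvPolynomial (η ⊕ μ) R
  | Sum.inl i => rename Sum.inl (P i)
  | Sum.inr i => C b * X (Sum.inr i) - rename Sum.inl (w i)

theorem auxD_map {R S η μ α : Type} [CommRing R] [CommRing S] (e : R →+* S)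
    (P : α → MvPolynomial η R) (b : R) (w : μ → MvPolynomial η R) (i : α ⊕ μ) :
    map e (auxD P b w i) = auxD (fun i => map e (P i)) (e b) (fun i => map e (w i)) i := by
  rcases i with i | i <;> simp [auxD, map_rename]

/-- the candidate normalization map -/
def auxκ {k η μ : Type} [Field k] (I : Ideal (MvPolynomial η k)) (b : k)
    (w : μ → MvPolynomial η k) : MvPolynomial μ k →ₐ[k] (MvPolynomial η k ⧸ I) :=
  aeval (fun i => Ideal.Quotient.mk I (C b⁻¹ * w i))

/-- the candidate normalization map, on the big polynomial ring -/
def auxΦ {k η μ : Type} [Field k] (I : Ideal (MvPolynomial η k)) (b : k)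
    (w : μ → MvPolynomial η k) : MvPolynomial (η ⊕ μ) k →ₐ[k] (MvPolynomial η k ⧸ I) :=
  aeval (Sum.elim (fun j => Ideal.Quotient.mk I (X j)) (fun i => Ideal.Quotient.mk I (C b⁻¹ * w i)))

theorem auxΦ_inr {k η μ : Type} [Field k] (I : Ideal (MvPolynomial η k)) (b : k)
    (w : μ → MvPolynomial η k) (q : MvPolynomial μ k) :
    auxΦ I b w (rename Sum.inr q) = auxκ I b w q := by
  simp only [auxΦ, auxκ, aeval_rename]; rfl

theorem auxΦ_inl {k η μ : Type} [Field k] (I : Ideal (MvPolynomial η k)) (b : k)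
    (w : μ → MvPolynomial η k) (q : MvPolynomial η k) :
    auxΦ I b w (rename Sum.inl q) = Ideal.Quotient.mk I q := by
  simp only [auxΦ, aeval_rename]
  have : aeval ((Sum.elim (fun j => Ideal.Quotient.mk I (X j))
      (fun i => Ideal.Quotient.mk I (C b⁻¹ * w i))) ∘ Sum.inl) = Ideal.Quotient.mkₐ k I := by
    ext j; simp
  rw [this]; rfl

theorem aux_DL {k η μ α : Type} [Field k] (P : α → MvPolynomial η k) (b : k) (hb : b ≠ 0)
    (w : μ → MvPolynomial η k) (q : MvPolynomial (η ⊕ μ) k) :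
    auxΦ (Ideal.span (Set.range P)) b w q = 0 ↔ q ∈ Ideal.span (Set.range (auxD P b w)) := by
  set I := Ideal.span (Set.range P) with hI
  set J := Ideal.span (Set.range (auxD P b w)) with hJ
  constructor
  · intro hq
    let sub : MvPolynomial (η ⊕ μ) k →ₐ[k] MvPolynomial η k :=
      aeval (Sum.elim X (fun i => C b⁻¹ * w i))
    have h1 : ∀ q, Ideal.Quotient.mk I (sub q) = auxΦ I b w q := by
      intro q
      have : (Ideal.Quotient.mkₐ k I).comp sub = auxΦ I b w := by
        apply MvPolynomial.algHom_ext
        rintro (j | i)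
        · simp [sub, auxΦ]
        · simp only [sub, auxΦ, AlgHom.comp_apply, aeval_X, Sum.elim_inr]; rfl
      rw [← this]; rfl
    have h2 : ∀ q, Ideal.Quotient.mk J (rename Sum.inl (sub q)) = Ideal.Quotient.mk J q := by
      intro q
      have : ((Ideal.Quotient.mkₐ k J).comp ((rename Sum.inl).comp sub)) = Ideal.Quotient.mkₐ k J := by
        apply MvPolynomial.algHom_ext
        rintro (j | i)
        · simp [sub]
        · simp only [sub, AlgHom.comp_apply, aeval_X, Sum.elim_inr]
          change Ideal.Quotient.mk J _ = Ideal.Quotient.mk J _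
          rw [eq_comm, Ideal.Quotient.eq]
          apply aux_unit_cancel hb
          have : C b * (X (Sum.inr i) - rename Sum.inl (C b⁻¹ * w i)) = auxD P b w (Sum.inr i) := by
            simp only [auxD, map_mul, rename_C, mul_sub, ← mul_assoc, ← C_mul, mul_inv_cancel₀ hb,
              C_1, one_mul]
          rw [this]
          exact Ideal.subset_span ⟨_, rfl⟩
      exact DFunLike.congr_fun this q
    rw [← h1, Ideal.Quotient.eq_zero_iff_mem] at hq
    rw [← Ideal.Quotient.eq_zero_iff_mem, ← h2, Ideal.Quotient.eq_zero_iff_mem]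
    have h3 : I ≤ J.comap (rename Sum.inl : MvPolynomial η k →ₐ[k] MvPolynomial (η ⊕ μ) k) := by
      rw [hI, Ideal.span_le]
      rintro _ ⟨i, rfl⟩
      exact Ideal.subset_span ⟨Sum.inl i, rfl⟩
    exact h3 hq
  · intro hq
    have : J ≤ RingHom.ker (auxΦ I b w) := by
      rw [hJ, Ideal.span_le]
      rintro _ ⟨i | i, rfl⟩
      · change auxΦ I b w (rename Sum.inl (P i)) = 0
        rw [auxΦ_inl, Ideal.Quotient.eq_zero_iff_mem]
        exact Ideal.subset_span ⟨i, rfl⟩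
      · change auxΦ I b w (C b * X (Sum.inr i) - rename Sum.inl (w i)) = 0
        rw [map_sub, auxΦ_inl, sub_eq_zero, map_mul]
        have h1 : auxΦ I b w (X (Sum.inr i)) = Ideal.Quotient.mk I (C b⁻¹ * w i) := by
          simp [auxΦ]
        have h2 : auxΦ I b w (C b) = Ideal.Quotient.mk I (C b) := by
          simp only [auxΦ, aeval_C]; rfl
        rw [h1, h2, ← map_mul, ← mul_assoc, ← C_mul, mul_inv_cancel₀ hb, C_1, one_mul]
    exact this hq

theorem aux_integral {k η μ : Type} [Field k] (I : Ideal (MvPolynomial η k)) (b : k)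
    (w : μ → MvPolynomial η k)
    (h : ∀ j, (auxκ I b w).toRingHom.IsIntegralElem (Ideal.Quotient.mk I (X j))) :
    (auxκ I b w).toRingHom.IsIntegral := by
  intro x
  obtain ⟨q, rfl⟩ := Ideal.Quotient.mk_surjective x
  induction q using MvPolynomial.induction_on with
  | C a =>
    have : Ideal.Quotient.mk I (C a) = (auxκ I b w).toRingHom (C a) := by
      simp [auxκ]; rfl
    rw [this]
    exact RingHom.isIntegralElem_map _
  | add p q hp hq => rw [map_add]; exact RingHom.IsIntegralElem.add _ hp hq
  | mul_X p j hp => rw [map_mul]; exact RingHom.IsIntegralElem.mul _ hp (h j)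

theorem aux_dim {R F K : Type} [CommRing R] [IsDomain R] [IsNoetherianRing R] [Field F]
    [Algebra R F] [IsFractionRing R F] [Field K] {l s : ℕ}
    (P : Fin l → MvPolynomial (Fin s) R)
    (hprime : (Ideal.span (Set.range fun i => map (algebraMap R F) (P i))).IsPrime) :
    ∃ g : R, g ≠ 0 ∧ ∀ e : R →+* K, Function.Surjective e → e g ≠ 0 →
      ringKrullDim (MvPolynomial (Fin s) K ⧸ Ideal.span (Set.range fun i => map e (P i))) =
      ringKrullDim (MvPolynomial (Fin s) F ⧸
        Ideal.span (Set.range fun i => map (algebraMap R F) (P i))) := by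
  classical
  have hinj : Function.Injective (algebraMap R F) := IsFractionRing.injective R F
  have hnz : ∀ b : R, b ≠ 0 → algebraMap R F b ≠ 0 := fun b hb => by simpa using hb
  set I := Ideal.span (Set.range fun i => map (algebraMap R F) (P i)) with hI
  obtain ⟨m, -, κ, hκinj, hκint⟩ := exists_integral_inj_algHom_of_quotient I hprime.ne_top
  choose v hv using fun i => Ideal.Quotient.mk_surjective (κ (X i))
  obtain ⟨b, hb, w, hw⟩ := aux_clear_fam (R := R) v
  have hκ : κ = auxκ I (algebraMap R F b) (fun i => map (algebraMap R F) (w i)) := by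
    apply MvPolynomial.algHom_ext
    intro i
    simp only [auxκ, aeval_X]
    rw [hw, ← mul_assoc, ← C_mul, inv_mul_cancel₀ (hnz b hb), C_1, one_mul, hv]
  have DLF := aux_DL (fun i => map (algebraMap R F) (P i)) _ (hnz b hb)
    (fun i => map (algebraMap R F) (w i))
  set G := auxD P b w with hG
  have hGF : Set.range (auxD (fun i => map (algebraMap R F) (P i)) (algebraMap R F b)
      (fun i => map (algebraMap R F) (w i))) = Set.range fun i => map (algebraMap R F) (G i) := by
    congr 1; funext i; rw [hG, auxD_map]
  rw [hGF, ← hI] at DLF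
  obtain ⟨g1, hg1, hEL⟩ := aux_elim (K := K) G (fun i : Empty => (i.elim : MvPolynomial (Fin m) R)) (by
    intro q hq
    have h1 := aux_map_span (algebraMap R F) G hq
    rw [map_rename, ← DLF, auxΦ_inr, ← hκ] at h1
    have h2 : map (algebraMap R F) q = 0 := hκinj (by rw [h1, map_zero])
    have h3 : q = 0 := map_injective _ hinj (by rw [h2, map_zero])
    exact ⟨1, one_ne_zero, by rw [h3, mul_zero]; exact Ideal.zero_mem _⟩)
  have hintegral : ∀ j : Fin s, ∃ (N : ℕ) (p : Fin N → MvPolynomial (Fin m) R) (a d : R),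
      a ≠ 0 ∧ d ≠ 0 ∧ C d * (C a * X (Sum.inl j) ^ N +
        ∑ k, rename Sum.inr (p k) * X (Sum.inl j) ^ (k : ℕ)) ∈ Ideal.span (Set.range G) := by
    intro j
    obtain ⟨p, hp, hpj⟩ := hκint (Ideal.Quotient.mk I (X j))
    obtain ⟨a, ha, p', hp'⟩ := aux_clear_fam (R := R) (fun k : Fin p.natDegree => p.coeff k)
    obtain ⟨d, hd, hdG⟩ := aux_spread (F := F) G (C a * X (Sum.inl j) ^ p.natDegree +
        ∑ k, rename Sum.inr (p' k) * X (Sum.inl j) ^ (k : ℕ)) (by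
      rw [← DLF]
      have hX : auxΦ I (algebraMap R F b) (fun i => map (algebraMap R F) (w i)) (X (Sum.inl j))
          = Ideal.Quotient.mk I (X j) := by simp [auxΦ]
      simp only [map_add, map_mul, map_C, map_pow, map_X, map_sum, map_rename, hX, auxΦ_inr,
        ← hκ, hp']
      rw [Polynomial.eval₂_eq_sum_range, Finset.sum_range_succ, hp.coeff_natDegree, map_one,
        one_mul, Finset.sum_range] at hpj
      have hCa : κ (C (algebraMap R F a)) = auxΦ I (algebraMap R F b)
          (fun i => map (algebraMap R F) (w i)) (C (algebraMap R F a)) := by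
        rw [hκ, ← auxΦ_inr, rename_C]
      simp only [hCa, mul_assoc]
      rw [← Finset.mul_sum, ← mul_add, add_comm]
      exact mul_eq_zero_of_right _ hpj)
    exact ⟨_, p', a, d, ha, hd, hdG⟩
  choose N p a d ha hd hE using hintegral
  refine ⟨b * g1 * (∏ j, a j) * ∏ j, d j, mul_ne_zero (mul_ne_zero (mul_ne_zero hb hg1)
    (Finset.prod_ne_zero_iff.2 fun i _ => ha i)) (Finset.prod_ne_zero_iff.2 fun i _ => hd i), ?_⟩
  intro e he heg
  simp only [map_mul, map_prod, mul_ne_zero_iff, Finset.prod_ne_zero_iff, Finset.mem_univ,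
    true_imp_iff] at heg
  obtain ⟨⟨⟨heb, he1⟩, hea⟩, hed⟩ := heg
  have DLt := aux_DL (fun i => map e (P i)) _ heb (fun i => map e (w i))
  have hGt : Set.range (auxD (fun i => map e (P i)) (e b)
      (fun i => map e (w i))) = Set.range fun i => map e (G i) := by
    congr 1; funext i; rw [hG, auxD_map]
  rw [hGt] at DLt
  set It := Ideal.span (Set.range fun i => map e (P i)) with hIt
  set κt := auxκ It (e b) (fun i => map e (w i)) with hκt
  rw [aux_krull m κ.toRingHom hκinj hκint]
  refine aux_krull m κt.toRingHom ?_ ?_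
  · rw [injective_iff_map_eq_zero]
    intro q hq
    have h1 : κt q = 0 := hq
    rw [hκt, ← auxΦ_inr, DLt] at h1
    have h2 := hEL e he he1 q h1
    rw [Set.range_eq_empty, Ideal.span_empty] at h2
    exact h2
  · apply aux_integral
    intro j
    have h1 := aux_map_span e G (hE j)
    rw [map_mul, map_C] at h1
    have h2 := aux_unit_cancel (hed j) h1
    rw [← DLt] at h2
    have hX : auxΦ It (e b) (fun i => map e (w i)) (X (Sum.inl j))
          = Ideal.Quotient.mk It (X j) := by simp [auxΦ]
    simp only [map_add, map_mul, map_C, map_pow, map_X, map_sum, map_rename, hX, auxΦ_inr,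
        ← hκt] at h2
    have hC : ∀ x : K, auxΦ It (e b) (fun i => map e (w i)) (C x) = κt (C x) := by
      intro x
      rw [hκt, ← auxΦ_inr, rename_C]
    refine ⟨Polynomial.X ^ (N j) + ∑ k : Fin (N j), Polynomial.C (C (e (a j))⁻¹ * map e (p j k)) *
      Polynomial.X ^ (k : ℕ), Polynomial.monic_X_pow_add (Polynomial.degree_sum_fin_lt _), ?_⟩
    simp only [Polynomial.eval₂_add, Polynomial.eval₂_finsetSum, Polynomial.eval₂_mul,
      Polynomial.eval₂_pow, Polynomial.eval₂_X, Polynomial.eval₂_C]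
    change _ + ∑ k, κt _ * _ = 0
    have h3 : κt (C (e (a j))⁻¹) * κt (C (e (a j))) = 1 := by
      rw [← map_mul, ← C_mul, inv_mul_cancel₀ (hea j), C_1, map_one]
    rw [hC] at h2
    have h4 := congrArg (κt (C (e (a j))⁻¹) * ·) h2
    simp only [mul_add, ← mul_assoc, h3, one_mul, mul_zero, Finset.mul_sum] at h4
    simpa only [map_mul] using h4

theorem aux_sep {F L : Type} [Field F] [CommRing L] (f : F →+* L) (inst : Algebra F L)
    (hf : f = algebraMap F L) (h : IsSepExtOfHom F L f) :
    IsReduced (AlgebraicClosure F ⊗[F] L) := by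
  have e : f.toAlgebra = inst := by
    apply Algebra.algebra_ext
    intro r
    rw [hf]; rfl
  clear hf
  subst e
  exact h

/-- `K[T,Y] → K[T][Y]` -/
def auxIter (K : Type) [Field K] (r s : ℕ) :
    MvPolynomial (Fin r ⊕ Fin s) K →+* MvPolynomial (Fin s) (MvPolynomial (Fin r) K) :=
  eval₂Hom ((C).comp C) (Sum.elim (fun i => C (X i)) (fun j => X j))

theorem auxIter_ext (K : Type) [Field K] (r s : ℕ) (p : MvPolynomial (Fin r ⊕ Fin s) K) :
    extHom K r s p = map (algebraMap (MvPolynomial (Fin r) K) (RatFuncField K (Fin r)))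
      (auxIter K r s p) := by
  have : extHom K r s = (map (algebraMap (MvPolynomial (Fin r) K) (RatFuncField K (Fin r)))).comp
      (auxIter K r s) := by
    apply MvPolynomial.ringHom_ext
    · intro a; simp [extHom, auxIter]
    · rintro (i | i) <;> simp [extHom, auxIter]
  rw [this]; rfl

theorem auxIter_spec (K : Type) [Field K] (r s : ℕ) (t : Fin r → K)
    (p : MvPolynomial (Fin r ⊕ Fin s) K) :
    specHom K t p = map (eval t) (auxIter K r s p) := by
  have : specHom K t = (map (eval t)).comp (auxIter K r s) := by
    apply MvPolynomial.ringHom_ext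
    · intro a; simp [specHom, auxIter]
    · rintro (i | i) <;> simp [specHom, auxIter]
  rw [this]; rfl

theorem aux_specializes (K : Type) [Field K] {r n : ℕ} (t : Fin r → K)
    (f : MvPolynomial (Fin n) (MvPolynomial (Fin r) K)) (q : MvPolynomial (Fin n) K)
    (h : PolySpecializesTo K t (map (algebraMap (MvPolynomial (Fin r) K)
      (RatFuncField K (Fin r))) f) q) : q = map (eval t) f := by
  ext m
  obtain ⟨a, b, hb, h1, h2⟩ := h m
  rw [coeff_map] at h1 ⊢
  rw [← map_mul] at h1
  have h3 := IsFractionRing.injective (MvPolynomial (Fin r) K) (RatFuncField K (Fin r)) h1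
  rw [← h3, map_mul] at h2
  exact mul_left_cancel₀ hb h2


/-- Combination of primality and dimension, over an abstract base. -/
theorem aux_both {R F K : Type} [CommRing R] [IsDomain R] [IsNoetherianRing R] [Field F]
    [Algebra R F] [IsFractionRing R F] [Field K] {l s : ℕ}
    (P : Fin l → MvPolynomial (Fin s) R) (E : Fin l → MvPolynomial (Fin s) F)
    (hE : E = fun i => map (algebraMap R F) (P i))
    (hprime : (Ideal.span (Set.range E)).IsPrime)
    (hsep : IsSepOverBase F (MvPolynomial (Fin s) F ⧸ Ideal.span (Set.range E))) :
    ∃ (n : ℕ) (f : MvPolynomial (Fin n) R), Irreducible (map (algebraMap R F) f) ∧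
      ∃ g : R, g ≠ 0 ∧ ∀ e : R →+* K, Function.Surjective e → e g ≠ 0 →
        Irreducible (map e f) → ∀ S : Fin l → MvPolynomial (Fin s) K,
          S = (fun i => map e (P i)) → (Ideal.span (Set.range S)).IsPrime ∧
        ringKrullDim (MvPolynomial (Fin s) K ⧸ Ideal.span (Set.range S)) =
          ringKrullDim (MvPolynomial (Fin s) F ⧸ Ideal.span (Set.range E)) := by
  subst hE
  have hsep' := aux_sep _ inferInstance
    (IsScalarTower.algebraMap_eq F _ _).symm hsep
  obtain ⟨n, f, hf, g1, hg1, H1⟩ := aux_prime (K := K) P hprime hsep'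
  obtain ⟨g2, hg2, H2⟩ := aux_dim (K := K) P hprime
  refine ⟨n, f, hf, g1 * g2, mul_ne_zero hg1 hg2, fun e he hg hirr S hS => ?_⟩
  subst hS
  rw [map_mul, mul_ne_zero_iff] at hg
  exact ⟨H1 _ he hg.1 hirr, H2 _ he hg.2⟩

/-- Hilbert specialization of parametrized varieties over a Hilbertian
field: if `p̃_T = ⟨P_1,…,P_l⟩ ⊆ K(T)[Y]` is prime with separable residue field extension and
quotient of Krull dimension `d`, then the set of `t ∈ K^r` for which the specialized ideal
`p_t = ⟨P_1(t,Y),…,P_l(t,Y)⟩ ⊆ K[Y]` is prime with quotient of Krull dimension `d`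
is Zariski-dense in `K^r`. -/
theorem stmt_0 (K : Type) [Field K] (hK : IsHilbertianField K)
    (r s : ℕ) (hr : 1 ≤ r) (hs : 1 ≤ s) (l : ℕ)
    (P : Fin l → MvPolynomial (Fin r ⊕ Fin s) K)
    (hprime : (Ideal.span (Set.range fun i => extHom K r s (P i))).IsPrime)
    (hsep : IsSepOverBase (RatFuncField K (Fin r))
      (MvPolynomial (Fin s) (RatFuncField K (Fin r)) ⧸
        Ideal.span (Set.range fun i => extHom K r s (P i))))
    (d : WithBot ℕ∞)
    (hd : ringKrullDim (MvPolynomial (Fin s) (RatFuncField K (Fin r)) ⧸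
        Ideal.span (Set.range fun i => extHom K r s (P i))) = d) :
    IsZariskiDense K {t : Fin r → K |
      (Ideal.span (Set.range fun i => specHom K t (P i))).IsPrime ∧
      ringKrullDim (MvPolynomial (Fin s) K ⧸
        Ideal.span (Set.range fun i => specHom K t (P i))) = d} := by
  intro g0 hg0
  have hext : (fun i => extHom K r s (P i)) = fun i => map (algebraMap (MvPolynomial (Fin r) K)
      (RatFuncField K (Fin r))) (auxIter K r s (P i)) := by
    funext i; exact auxIter_ext K r s (P i)
  subst hd
  obtain ⟨n, f, hf, g1, hg1, H1⟩ := aux_both (R := MvPolynomial (Fin r) K)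
    (F := RatFuncField K (Fin r)) (K := K) (fun i => auxIter K r s (P i))
    (fun i => extHom K r s (P i)) hext hprime hsep
  obtain ⟨t, ⟨-, ht⟩, htg⟩ := hK r hr _ ⟨n, 1, 1, fun _ => map (algebraMap (MvPolynomial (Fin r) K)
      (RatFuncField K (Fin r))) f, fun _ => 1, fun _ => hf, ⟨0, 0, by simp⟩, rfl⟩
    (g0 * g1) (mul_ne_zero hg0 hg1)
  obtain ⟨q, hq, hqirr⟩ := ht 0
  rw [aux_specializes K t f q hq] at hqirr
  rw [map_mul, mul_ne_zero_iff] at htg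
  have he : Function.Surjective (eval t : MvPolynomial (Fin r) K →+* K) := fun a => ⟨C a, by simp⟩
  refine ⟨t, ?_, htg.1⟩
  have hspec : (fun i => specHom K t (P i)) = fun i => map (eval t) (auxIter K r s (P i)) := by
    funext i; exact auxIter_spec K r s t (P i)
  exact H1 _ he htg.2 hqirr _ hspec
end
end

section
/- Let R be an integral domain with fraction field F, and let A be an integral domain containing R as a subring that is a finitely generated R-algebra; let L = Frac(A) and d = trdeg_F(L). Then there exist a nonzero element c ∈ R and elements z_1,…,z_d ∈ A[c⁻¹] that are algebraically independent over R[c⁻¹] such that A[c⁻¹] is a finitely generated module over its subring R[c⁻¹][z_1,…,z_d]. Moreover, if L is a separable extension of F, then z_1,…,z_d can be chosen so that L is a separable algebraic extension of F(z_1,…,z_d) (i.e. z_1,…,z_d is a separating transcendence basis of L/F). -/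
open MvPolynomial

noncomputable section

/-- The conclusion of the Noether Normalization Lemma for `c : R` and `z : Fin d → L`
(all objects viewed inside `L = Frac A`): each `z i` lies in `A[c⁻¹]`, the `z i` are
algebraically independent over `R[c⁻¹]`, and `A[c⁻¹]` is a finitely generated module over
its subring `R[c⁻¹][z]`. -/
def NNConclusion (R A L : Type) [CommRing R] [CommRing A] [Field L]
    [Algebra R A] [Algebra A L] [Algebra R L] {d : ℕ} (c : R) (z : Fin d → L) : Prop :=
  (∀ i, z i ∈ Algebra.adjoin R (Set.range (algebraMap A L) ∪ {(algebraMap R L c)⁻¹})) ∧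
  AlgebraicIndependent ↥(Algebra.adjoin R ({(algebraMap R L c)⁻¹} : Set L)) z ∧
  ∃ (k : ℕ) (g : Fin k → L),
    (∀ j, g j ∈ Algebra.adjoin R (Set.range (algebraMap A L) ∪ {(algebraMap R L c)⁻¹})) ∧
    ∀ a ∈ Algebra.adjoin R (Set.range (algebraMap A L) ∪ {(algebraMap R L c)⁻¹}),
      a ∈ Submodule.span
        ↥(Algebra.adjoin ↥(Algebra.adjoin R ({(algebraMap R L c)⁻¹} : Set L)) (Set.range z))
        (Set.range g)

lemma nn_isAlgebraic {F L : Type} [Field F] [Field L] [Algebra F L] (s : Set L)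
    (hgen : IntermediateField.adjoin F s = ⊤) (S : Subalgebra F L)
    (h : ∀ x ∈ s, IsIntegral S x) : Algebra.IsAlgebraic S L := by
  refine ⟨fun x => ?_⟩
  have hx : x ∈ IntermediateField.adjoin F s := hgen ▸ IntermediateField.mem_top
  induction hx using IntermediateField.adjoin_induction with
  | mem x hx => exact (h x hx).isAlgebraic
  | algebraMap a =>
    rw [IsScalarTower.algebraMap_apply F S L]
    exact isAlgebraic_algebraMap _
  | add x y _ _ hx hy => exact hx.add hy
  | inv x _ hx => exact hx.inv
  | mul x y _ _ hx hy => exact hx.mul hy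

lemma nn_basis {F L : Type} [Field F] [Field L] [Algebra F L] (s : Set L)
    (hgen : IntermediateField.adjoin F s = ⊤) (d : ℕ) (hd : Algebra.trdeg F L = d)
    (z : Fin d → L)
    (h : ∀ x ∈ s, IsIntegral (Algebra.adjoin F (Set.range z)) x) : IsTranscendenceBasis F z := by
  have := nn_isAlgebraic s hgen _ h
  exact Algebra.IsAlgebraic.isTranscendenceBasis_of_le_trdeg_of_finite F z (by simp [hd])

lemma nn_core1 {F L : Type} [Field F] [Field L] [Algebra F L] (s : Set L) (hs : s.Finite)
    (hgen : IntermediateField.adjoin F s = ⊤) (d : ℕ) (hd : Algebra.trdeg F L = d) :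
    ∃ y : Fin d → L, (∀ i, y i ∈ Algebra.adjoin F s) ∧
      (∀ x ∈ Algebra.adjoin F s, IsIntegral (Algebra.adjoin F (Set.range y)) x) := by
  have : Algebra.FiniteType F (Algebra.adjoin F s) :=
    (Subalgebra.fg_iff_finiteType _).mp (Subalgebra.fg_def.mpr ⟨s, hs, rfl⟩)
  obtain ⟨m, g, hg, hint⟩ := exists_integral_inj_algHom_of_fg F (Algebra.adjoin F s)
  let y : Fin m → L := fun i => (g (X i) : L)
  have hy : (Algebra.adjoin F s).val.comp g = aeval y := by
    ext i; simp [y]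
  have hind : AlgebraicIndependent F y := by
    rw [AlgebraicIndependent, ← hy]
    exact Subtype.val_injective.comp hg
  have hi : ∀ x ∈ Algebra.adjoin F s, IsIntegral (Algebra.adjoin F (Set.range y)) x := by
    intro x hx
    have h1 : (aeval y : MvPolynomial (Fin m) F →ₐ[F] L).toRingHom.IsIntegralElem x := by
      rw [← hy]
      exact (hint ⟨x, hx⟩).map (Algebra.adjoin F s).val.toRingHom
    obtain ⟨p, hp, hp0⟩ := h1
    let φ : MvPolynomial (Fin m) F →ₐ[F] Algebra.adjoin F (Set.range y) :=
      aeval (fun i => ⟨y i, Algebra.subset_adjoin ⟨i, rfl⟩⟩)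
    refine ⟨p.map φ.toRingHom, hp.map _, ?_⟩
    rw [Polynomial.eval₂_map]
    have hφ : ((Algebra.adjoin F (Set.range y)).val.comp φ) = aeval y := by
      ext i; simp [φ]
    rw [← hφ] at hp0
    exact hp0
  have halg := nn_isAlgebraic s hgen _ (fun x hx => hi x (Algebra.subset_adjoin hx))
  have hb : IsTranscendenceBasis F y := hind.isTranscendenceBasis_iff_isAlgebraic.mpr halg
  have hm : m = d := by
    have := hb.cardinalMk_eq_trdeg
    rw [hd] at this
    simpa using this
  subst hm
  exact ⟨y, fun i => (g (X i)).2, hi⟩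

lemma nn_val_bound {F L : Type} [Field F] [Field L] [Algebra F L] {d : ℕ} (y : Fin d → L)
    (w : L) (hw : w ∈ Algebra.adjoin F (Set.range y)) :
    ∃ D : ℕ, ∀ V : ValuationSubring L, (∀ a : F, algebraMap F L a ∈ V) → ∀ γ : V.ValueGroup,
      1 ≤ γ → (∀ i, V.valuation (y i) ≤ γ) → V.valuation w ≤ γ ^ D := by
  induction hw using Algebra.adjoin_induction with
  | mem x hx =>
    obtain ⟨i, rfl⟩ := hx
    exact ⟨1, fun V _ γ _ h => by simpa using h i⟩
  | algebraMap r => exact ⟨0, fun V hV γ _ _ => by simpa using (V.valuation_le_one_iff _).mpr (hV r)⟩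
  | add x z _ _ hx hz =>
    obtain ⟨D, hD⟩ := hx
    obtain ⟨E, hE⟩ := hz
    refine ⟨D + E, fun V hV γ h1 h => ?_⟩
    refine (V.valuation.map_add _ _).trans (max_le ?_ ?_)
    · exact (hD V hV γ h1 h).trans (pow_le_pow_right₀ h1 (by omega))
    · exact (hE V hV γ h1 h).trans (pow_le_pow_right₀ h1 (by omega))
  | mul x z _ _ hx hz =>
    obtain ⟨D, hD⟩ := hx
    obtain ⟨E, hE⟩ := hz
    refine ⟨D + E, fun V hV γ h1 h => ?_⟩
    rw [map_mul, pow_add]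
    exact mul_le_mul' (hD V hV γ h1 h) (hE V hV γ h1 h)

lemma nn_val_bound_int {F L : Type} [Field F] [Field L] [Algebra F L] {d : ℕ} (y : Fin d → L)
    (w : L) (hw : IsIntegral (Algebra.adjoin F (Set.range y)) w) :
    ∃ D : ℕ, ∀ V : ValuationSubring L, (∀ a : F, algebraMap F L a ∈ V) → ∀ γ : V.ValueGroup,
      1 ≤ γ → (∀ i, V.valuation (y i) ≤ γ) → V.valuation w ≤ γ ^ D := by
  obtain ⟨p, hp, hp0⟩ := hw
  choose D hD using fun k => nn_val_bound (F := F) y (p.coeff k : L) (p.coeff k).2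
  refine ⟨∑ k ∈ Finset.range p.natDegree, D k, fun V hV γ h1 h => ?_⟩
  by_contra! hlt
  have h1w : 1 < V.valuation w := (one_le_pow₀ h1).trans_lt hlt
  have e : w ^ p.natDegree = - ∑ k ∈ Finset.range p.natDegree, (p.coeff k : L) * w ^ k := by
    rw [Polynomial.eval₂_eq_sum_range, Finset.sum_range_succ, hp.coeff_natDegree] at hp0
    simp only [map_one, one_mul] at hp0
    exact eq_neg_of_add_eq_zero_right hp0
  have : V.valuation (w ^ p.natDegree) < V.valuation w ^ p.natDegree := by
    conv_lhs => rw [e, Valuation.map_neg]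
    refine V.valuation.map_sum_lt (pow_ne_zero _ (zero_lt_one.trans h1w).ne') fun k hk => ?_
    have hk' := Finset.mem_range.mp hk
    rw [map_mul, map_pow]
    calc _ < V.valuation w * V.valuation w ^ k := by
          refine mul_lt_mul_of_pos_right (lt_of_le_of_lt ?_ hlt) (pow_pos (zero_lt_one.trans h1w) _)
          refine (hD k V hV γ h1 h).trans (pow_le_pow_right₀ h1 ?_)
          exact Finset.single_le_sum (f := D) (fun _ _ => Nat.zero_le _) hk
      _ = V.valuation w ^ (k + 1) := (pow_succ' _ _).symm
      _ ≤ _ := pow_le_pow_right₀ h1w.le hk'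
  rw [map_pow] at this
  exact lt_irrefl _ this

lemma nn_twist {F L : Type} [Field F] [Field L] [Algebra F L] {d : ℕ} (y w : Fin d → L)
    (hw : ∀ i, IsIntegral (Algebra.adjoin F (Set.range y)) (w i)) :
    ∃ N : ℕ, ∀ e, N < e → ∀ i,
      IsIntegral (Algebra.adjoin F (Set.range fun i => w i + y i ^ e)) (y i) := by
  choose D hD using fun i => nn_val_bound_int (F := F) y (w i) (hw i)
  refine ⟨∑ i, D i, fun e he i => ?_⟩
  set z : Fin d → L := fun i => w i + y i ^ e with hz
  have key : y i ∈ (integralClosure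
      (Subring.closure (Set.range (algebraMap F L) ∪ Set.range z)) L).toSubring := by
    rw [← iInf_valuationSubring_superset, Subring.mem_iInf]
    rintro ⟨V, hV⟩
    change y i ∈ V
    have hVF : ∀ a : F, algebraMap F L a ∈ V := fun a => hV (Or.inl ⟨a, rfl⟩)
    by_contra hi
    have : Nonempty (Fin d) := ⟨i⟩
    obtain ⟨j, hj⟩ := Finite.exists_max fun j => V.valuation (y j)
    have hγ : 1 < V.valuation (y j) := by
      rw [← V.valuation_le_one_iff, not_le] at hi
      exact hi.trans_le (hj i)
    have h1 := hD j V hVF _ hγ.le hj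
    have h2 : V.valuation (w j) < V.valuation (y j ^ e) := by
      rw [map_pow]
      refine h1.trans_lt (pow_lt_pow_right₀ hγ (lt_of_le_of_lt ?_ he))
      exact Finset.single_le_sum (f := D) (fun _ _ => Nat.zero_le _) (Finset.mem_univ j)
    have h3 : V.valuation (z j) = V.valuation (y j ^ e) :=
      V.valuation.map_add_eq_of_lt_right h2
    have h4 : V.valuation (z j) ≤ 1 := (V.valuation_le_one_iff _).mpr (hV (Or.inr ⟨j, rfl⟩))
    rw [h3, map_pow] at h4
    exact absurd (one_lt_pow₀ hγ (by omega)) (not_lt.mpr h4)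
  obtain ⟨p, hp, hp0⟩ := key
  let ι : Subring.closure (Set.range (algebraMap F L) ∪ Set.range z) →+*
      Algebra.adjoin F (Set.range z) :=
    Subring.inclusion (T := (Algebra.adjoin F (Set.range z)).toSubring)
      (Algebra.adjoin_eq_ring_closure (R := F) (Set.range z)).ge
  refine ⟨p.map ι, hp.map _, ?_⟩
  rw [Polynomial.eval₂_map]
  exact hp0

lemma nn_der_zero {E L M : Type} [Field E] [Field L] [Algebra E L] [Algebra.IsSeparable E L]
    [AddCommGroup M] [Module E M] [Module L M] [IsScalarTower E L M]
    (D : Derivation E L M) (x : L) : D x = 0 := by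
  have := Algebra.FormallyUnramified.of_isSeparable E L
  have h : KaehlerDifferential.D E L x = 0 := Subsingleton.elim _ _
  rw [← D.liftKaehlerDifferential_comp_D, h, map_zero]

lemma nn_sep {F L : Type} [Field F] [Field L] [Algebra F L] [Algebra.EssFiniteType F L]
    (p : ℕ) [CharP L p] {d : ℕ} (w b y : Fin d → L) (hb : ∀ i, b i ≠ 0) (e : ℕ) (he : p ∣ e)
    (hw : Algebra.IsSeparable (IntermediateField.adjoin F (Set.range w)) L) :
    Algebra.IsSeparable
      (IntermediateField.adjoin F (Set.range fun i => w i * b i ^ p + y i ^ e)) L := by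
  set z : Fin d → L := fun i => w i * b i ^ p + y i ^ e with hz
  set K := IntermediateField.adjoin F (Set.range z) with hK
  have : Algebra.EssFiniteType K L := Algebra.EssFiniteType.of_comp F K L
  rw [← Algebra.FormallyUnramified.iff_isSeparable]
  let D := KaehlerDifferential.D K L
  have hpow : ∀ (m : ℕ) (hm : p ∣ m) (x : L), D (x ^ m) = 0 := by
    intro m hm x
    rw [Derivation.leibniz_pow, ← Nat.cast_smul_eq_nsmul L, (CharP.cast_eq_zero_iff L p m).mpr hm,
      zero_smul]
  have hDw : ∀ i, D (w i) = 0 := by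
    intro i
    have h1 : D (z i) = 0 :=
      D.map_algebraMap (⟨z i, IntermediateField.subset_adjoin F _ ⟨i, rfl⟩⟩ : K)
    simp only [hz, map_add, Derivation.leibniz, hpow e he, hpow p dvd_rfl, smul_zero, zero_add,
      add_zero] at h1
    exact (smul_eq_zero.mp h1).resolve_left (pow_ne_zero _ (hb i))
  have hDE : ∀ x ∈ IntermediateField.adjoin F (Set.range w), D x = 0 := by
    intro x hx
    induction hx using IntermediateField.adjoin_induction with
    | mem x hx => obtain ⟨i, rfl⟩ := hx; exact hDw i
    | algebraMap a =>
      rw [IsScalarTower.algebraMap_apply F K L]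
      exact D.map_algebraMap _
    | add x y _ _ hx hy => rw [map_add, hx, hy, add_zero]
    | inv x _ hx => rw [Derivation.leibniz_inv, hx, smul_zero]
    | mul x y _ _ hx hy => rw [Derivation.leibniz, hx, hy, smul_zero, smul_zero, add_zero]
  let E := IntermediateField.adjoin F (Set.range w)
  let D' : Derivation E L (Ω[L⁄K]) :=
    { toFun := D
      map_add' := D.map_add
      map_smul' := by
        intro a x
        simp only [RingHom.id_apply]
        rw [Algebra.smul_def, Derivation.leibniz, show D (algebraMap E L a) = 0 from hDE _ a.2,
          smul_zero, add_zero, algebraMap_smul]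
      map_one_eq_zero' := D.map_one_eq_zero
      leibniz' := D.leibniz }
  have hD0 : ∀ x, D x = 0 := fun x => nn_der_zero D' x
  refine ⟨?_⟩
  rw [← Submodule.subsingleton_iff L, ← subsingleton_iff_bot_eq_top, 
    ← KaehlerDifferential.span_range_derivation, eq_comm, Submodule.span_eq_bot]
  rintro _ ⟨x, rfl⟩
  exact hD0 x

lemma nn_linIndep {F L : Type} [Field F] [Field L] [Algebra F L]
    (hred : IsReduced (TensorProduct F (AlgebraicClosure F) L)) (p : ℕ) (hp : p.Prime) [CharP F p]
    (s : Finset L) (hs : LinearIndepOn F _root_.id (s : Set L)) :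
    LinearIndepOn F (· ^ p) (s : Set L) := by
  have : Fact p.Prime := ⟨hp⟩
  let Fb := AlgebraicClosure F
  have : CharP (TensorProduct F Fb L) p :=
    charP_of_injective_algebraMap (algebraMap F (TensorProduct F Fb L)).injective p
  rw [LinearIndepOn, Fintype.linearIndependent_iff]
  intro g hg i
  choose c hc using fun i => IsAlgClosed.exists_pow_nat_eq (algebraMap F Fb (g i)) hp.pos
  have h0 : ∑ i, (c i) ⊗ₜ[F] (i.1 : L) = (0 : TensorProduct F Fb L) := by
    refine eq_zero_of_pow_eq_zero (n := p) ?_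
    rw [sum_pow_char]
    calc _ = ∑ i, (1 : Fb) ⊗ₜ[F] (g i • (i.1 : L) ^ p) := by
          refine Finset.sum_congr rfl fun i _ => ?_
          rw [Algebra.TensorProduct.tmul_pow, hc, Algebra.algebraMap_eq_smul_one,
            TensorProduct.smul_tmul]
      _ = 0 := by rw [← TensorProduct.tmul_sum, hg, TensorProduct.tmul_zero]
  have hli : LinearIndependent Fb (fun i : (s : Set L) => (1 : Fb) ⊗ₜ[F] (i.1 : L)) := by
    exact Module.Flat.linearIndependent_one_tmul hs
  rw [Fintype.linearIndependent_iff] at hli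
  have := hli c (by simpa [TensorProduct.smul_tmul'] using h0) i
  have h := hc i
  rw [this, zero_pow hp.ne_zero] at h
  exact (map_eq_zero _).mp h.symm

lemma nn_core2 {F L : Type} [Field F] [Field L] [Algebra F L] (s : Set L) (hs : s.Finite)
    (hgen : IntermediateField.adjoin F s = ⊤) (d : ℕ) (hd : Algebra.trdeg F L = d)
    (hred : IsReduced (TensorProduct F (AlgebraicClosure F) L)) :
    ∃ z : Fin d → L, (∀ i, z i ∈ Algebra.adjoin F s) ∧
      (∀ x ∈ Algebra.adjoin F s, IsIntegral (Algebra.adjoin F (Set.range z)) x) ∧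
      Algebra.IsSeparable (IntermediateField.adjoin F (Set.range z)) L := by
  obtain ⟨y, hyB, hyint⟩ := nn_core1 s hs hgen d hd
  obtain h0 | ⟨p, hp, hpF⟩ := CharP.exists' F
  · refine ⟨y, hyB, hyint, ?_⟩
    have hb := nn_basis s hgen d hd y fun x hx => hyint x (Algebra.subset_adjoin hx)
    have := hb.isAlgebraic_field
    have : CharZero (IntermediateField.adjoin F (Set.range y)) :=
      charZero_of_injective_algebraMap (algebraMap F _).injective
    infer_instance
  have hess : Algebra.EssFiniteType F L :=
    IntermediateField.fg_top_iff.mp ⟨hs.toFinset, by simpa using hgen⟩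
  have hpL : CharP L p := charP_of_injective_algebraMap (algebraMap F L).injective p
  obtain ⟨t, ht, hsep⟩ :=
    exists_isTranscendenceBasis_and_isSeparable_of_linearIndepOn_pow_of_essFiniteType
      (k := F) (K := L) p hp.out (nn_linIndep hred p hp.out)
  have hcard : Fintype.card t = d := by
    have := ht.cardinalMk_eq_trdeg
    rw [hd] at this
    simpa using this
  let eq : Fin d ≃ t := (Fintype.equivFinOfCardEq hcard).symm
  let w : Fin d → L := fun i => (eq i : L)
  have hwr : Set.range w = (t : Set L) := by
    change Set.range (Subtype.val ∘ eq) = _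
    rw [eq.surjective.range_comp]
    simp
  rw [← hwr] at hsep
  have hfrac : ∀ i, ∃ b : L, b ≠ 0 ∧ b ∈ Algebra.adjoin F s ∧ w i * b ∈ Algebra.adjoin F s := by
    intro i
    have : w i ∈ IntermediateField.adjoin F s := hgen ▸ IntermediateField.mem_top
    obtain ⟨a, ha, b, hb, hab⟩ := IntermediateField.mem_adjoin_iff_div.mp this
    by_cases h : b = 0
    · exact ⟨1, one_ne_zero, one_mem _, by simp [hab, h]⟩
    · exact ⟨b, h, hb, by rw [hab, div_mul_cancel₀ _ h]; exact ha⟩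
  choose b hb0 hb hwb using hfrac
  have hwB : ∀ i, w i * b i ^ p ∈ Algebra.adjoin F s := by
    intro i
    obtain ⟨q, hq⟩ := Nat.exists_eq_succ_of_ne_zero hp.out.ne_zero
    rw [hq, pow_succ', ← mul_assoc]
    exact mul_mem (hwb i) (pow_mem (hb i) _)
  obtain ⟨N, hN⟩ := nn_twist y (fun i => w i * b i ^ p) fun i => hyint _ (hwB i)
  have hlt : N < p * (N + 1) :=
    (Nat.lt_succ_self N).trans_le (Nat.le_mul_of_pos_left _ hp.out.pos)
  have hint := hN _ hlt
  refine ⟨fun i => w i * b i ^ p + y i ^ (p * (N + 1)),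
    fun i => add_mem (hwB i) (pow_mem (hyB i) _), fun x hx => ?_,
    nn_sep p w b y hb0 _ (dvd_mul_right _ _) hsep⟩
  set Z := Algebra.adjoin F (Set.range fun i => w i * b i ^ p + y i ^ (p * (N + 1)))
  have hle : Algebra.adjoin F (Set.range y) ≤ (integralClosure Z L).restrictScalars F := by
    rw [Algebra.adjoin_le_iff]
    rintro _ ⟨i, rfl⟩
    exact hint i
  obtain ⟨q, hq, hq0⟩ := hyint x hx
  have : IsIntegral (integralClosure Z L) x := by
    let ι : Algebra.adjoin F (Set.range y) →+* integralClosure Z L :=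
      (Subalgebra.inclusion hle).toRingHom
    refine ⟨q.map ι, hq.map _, ?_⟩
    rw [Polynomial.eval₂_map]
    exact hq0
  exact isIntegral_trans (R := Z) (A := integralClosure Z L) x this

lemma nn_clear {R F L : Type} [CommRing R] [IsDomain R] [Field F] [Algebra R F]
    [IsFractionRing R F] [Field L] [Algebra R L] [Algebra F L] [IsScalarTower R F L]
    (s : Set L) (x : L) (hx : x ∈ Algebra.adjoin F s) :
    ∃ r : R, r ≠ 0 ∧ ∀ c : R, c ≠ 0 → r ∣ c →
      x ∈ Algebra.adjoin R (s ∪ {(algebraMap R L c)⁻¹}) := by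
  have hinj : Function.Injective (algebraMap R L) := by
    rw [IsScalarTower.algebraMap_eq R F L]
    exact (algebraMap F L).injective.comp (IsFractionRing.injective R F)
  induction hx using Algebra.adjoin_induction with
  | mem x hx => exact ⟨1, one_ne_zero, fun c _ _ => Algebra.subset_adjoin (Or.inl hx)⟩
  | algebraMap f =>
    obtain ⟨a, b, hb, rfl⟩ := IsFractionRing.div_surjective (A := R) f
    have hb0 : b ≠ 0 := nonZeroDivisors.ne_zero hb
    refine ⟨b, hb0, ?_⟩
    rintro _ hc ⟨k, rfl⟩
    have hk : k ≠ 0 := right_ne_zero_of_mul hc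
    have hb' : algebraMap R L b ≠ 0 := (map_ne_zero_iff _ hinj).mpr hb0
    have hk' : algebraMap R L k ≠ 0 := (map_ne_zero_iff _ hinj).mpr hk
    have : algebraMap F L (algebraMap R F a / algebraMap R F b) =
        algebraMap R L (a * k) * (algebraMap R L (b * k))⁻¹ := by
      rw [map_div₀, ← IsScalarTower.algebraMap_apply, ← IsScalarTower.algebraMap_apply,
        map_mul, map_mul]
      field_simp
    rw [this]
    exact mul_mem (Subalgebra.algebraMap_mem _ _) (Algebra.subset_adjoin (Or.inr rfl))
  | add x y _ _ hx hy =>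
    obtain ⟨r, hr, h⟩ := hx
    obtain ⟨r', hr', h'⟩ := hy
    exact ⟨r * r', mul_ne_zero hr hr', fun c hc hd =>
      add_mem (h c hc (dvd_of_mul_right_dvd hd)) (h' c hc (dvd_of_mul_left_dvd hd))⟩
  | mul x y _ _ hx hy =>
    obtain ⟨r, hr, h⟩ := hx
    obtain ⟨r', hr', h'⟩ := hy
    exact ⟨r * r', mul_ne_zero hr hr', fun c hc hd =>
      mul_mem (h c hc (dvd_of_mul_right_dvd hd)) (h' c hc (dvd_of_mul_left_dvd hd))⟩

lemma nn_le {R L : Type} [CommRing R] [Field L] [Algebra R L] (u : L) (Z : Set L) (x : L)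
    (hx : x ∈ Algebra.adjoin R (Z ∪ {u})) :
    x ∈ Algebra.adjoin (Algebra.adjoin R ({u} : Set L)) Z := by
  induction hx using Algebra.adjoin_induction with
  | mem x hx =>
    rcases hx with hx | hx
    · exact Algebra.subset_adjoin hx
    · exact Subalgebra.algebraMap_mem (Algebra.adjoin (Algebra.adjoin R ({u} : Set L)) Z)
        (⟨x, Algebra.subset_adjoin hx⟩ : Algebra.adjoin R ({u} : Set L))
  | algebraMap a =>
    exact Subalgebra.algebraMap_mem (Algebra.adjoin (Algebra.adjoin R ({u} : Set L)) Z)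
      (algebraMap R (Algebra.adjoin R ({u} : Set L)) a)
  | add x y _ _ hx hy => exact add_mem hx hy
  | mul x y _ _ hx hy => exact mul_mem hx hy

lemma nn_clear_int {R F L : Type} [CommRing R] [IsDomain R] [Field F] [Algebra R F]
    [IsFractionRing R F] [Field L] [Algebra R L] [Algebra F L] [IsScalarTower R F L]
    (Z : Set L) (x : L) (hx : IsIntegral (Algebra.adjoin F Z) x) :
    ∃ r : R, r ≠ 0 ∧ ∀ c : R, c ≠ 0 → r ∣ c →
      IsIntegral (Algebra.adjoin (Algebra.adjoin R ({(algebraMap R L c)⁻¹} : Set L)) Z) x := by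
  obtain ⟨p, hp, hp0⟩ := hx
  choose r hr h using fun k => nn_clear (R := R) Z (p.coeff k : L) (p.coeff k).2
  refine ⟨∏ k ∈ p.support, r k, Finset.prod_ne_zero_iff.mpr fun k _ => hr k, fun c hc hd => ?_⟩
  set S := Algebra.adjoin (Algebra.adjoin R ({(algebraMap R L c)⁻¹} : Set L)) Z
  let P : Polynomial L := p.map (algebraMap (Algebra.adjoin F Z) L)
  have hP : P.Monic := hp.map _
  have hl : P ∈ Polynomial.lifts (algebraMap S L) := by
    rw [Polynomial.lifts_iff_coeff_lifts]
    intro k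
    rw [Polynomial.coeff_map]
    by_cases hk : k ∈ p.support
    · have := nn_le _ _ _ (h k c hc ((Finset.dvd_prod_of_mem r hk).trans hd))
      exact ⟨⟨_, this⟩, rfl⟩
    · rw [Polynomial.notMem_support_iff.mp hk, map_zero]
      exact ⟨0, map_zero _⟩
  obtain ⟨q, hq, -, hqm⟩ := Polynomial.lifts_and_degree_eq_and_monic hl hP
  refine ⟨q, hqm, ?_⟩
  rw [Polynomial.eval₂_eq_eval_map, hq, ← Polynomial.eval₂_eq_eval_map]
  exact hp0

lemma nn_indep {R F L : Type} [CommRing R] [IsDomain R] [Field F] [Algebra R F]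
    [IsFractionRing R F] [Field L] [Algebra R L] [Algebra F L] [IsScalarTower R F L]
    {d : ℕ} (z : Fin d → L) (hz : AlgebraicIndependent F z) (c : R) :
    AlgebraicIndependent ↥(Algebra.adjoin R ({(algebraMap R L c)⁻¹} : Set L)) z := by
  let φ : F →ₐ[R] L := IsScalarTower.toAlgHom R F L
  have hle : Algebra.adjoin R ({(algebraMap R L c)⁻¹} : Set L) ≤ φ.range := by
    rw [Algebra.adjoin_le_iff]
    rintro _ rfl
    refine ⟨(algebraMap R F c)⁻¹, ?_⟩
    change algebraMap F L _ = _
    rw [map_inv₀, ← IsScalarTower.algebraMap_apply]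
  let e := AlgEquiv.ofInjective φ φ.toRingHom.injective
  let f : Algebra.adjoin R ({(algebraMap R L c)⁻¹} : Set L) →ₐ[R] F :=
    e.symm.toAlgHom.comp (Subalgebra.inclusion hle)
  have hf : ∀ a, algebraMap F L (f a) = a := by
    intro a
    have := congrArg Subtype.val (e.apply_symm_apply (Subalgebra.inclusion hle a))
    exact this
  refine AlgebraicIndependent.of_ringHom_of_comp_eq (S := F) (B := L) f.toRingHom (RingHom.id L)
    (x := z) hz ?_ ?_
  · intro a b hab
    apply Subtype.ext
    rw [← hf a, ← hf b]
    exact congrArg _ hab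
  · ext a
    exact hf a

lemma nn_spread (R A F L : Type) [CommRing R] [IsDomain R] [CommRing A] [IsDomain A]
    [Algebra R A] [Field F] [Algebra R F] [IsFractionRing R F]
    [Field L] [Algebra A L] [Algebra R L] [IsScalarTower R A L]
    [Algebra F L] [IsScalarTower R F L] {d : ℕ}
    (t : Finset A) (ht : Algebra.adjoin R (t : Set A) = ⊤) (z : Fin d → L)
    (hz : ∀ i, z i ∈ Algebra.adjoin F (algebraMap A L '' t))
    (hint : ∀ x ∈ algebraMap A L '' t, IsIntegral (Algebra.adjoin F (Set.range z)) x)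
    (hind : AlgebraicIndependent F z) :
    ∃ c : R, c ≠ 0 ∧ NNConclusion R A L c z := by
  choose r hr hrz using fun i => nn_clear (R := R) _ _ (hz i)
  choose q hq hqt using fun a : t =>
    nn_clear_int (R := R) _ _ (hint _ ⟨a.1, a.2, rfl⟩)
  let c : R := (∏ i, r i) * ∏ a, q a
  have hc : c ≠ 0 := mul_ne_zero (Finset.prod_ne_zero_iff.mpr fun k _ => hr k)
    (Finset.prod_ne_zero_iff.mpr fun k _ => hq k)
  have hrc : ∀ i, r i ∣ c := fun i =>
    (Finset.dvd_prod_of_mem r (Finset.mem_univ i)).trans (dvd_mul_right _ _)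
  have hqc : ∀ a, q a ∣ c := fun a =>
    (Finset.dvd_prod_of_mem q (Finset.mem_univ a)).trans (dvd_mul_left _ _)
  have hzT : ∀ i, z i ∈
      Algebra.adjoin R (Set.range (algebraMap A L) ∪ {(algebraMap R L c)⁻¹}) := fun i =>
    Algebra.adjoin_mono (Set.union_subset_union_left _ (Set.image_subset_range _ _))
      (hrz i c hc (hrc i))
  refine ⟨c, hc, hzT, nn_indep z hind c, ?_⟩
  set T := Algebra.adjoin R (Set.range (algebraMap A L) ∪ {(algebraMap R L c)⁻¹}) with hT
  set R' := Algebra.adjoin R ({(algebraMap R L c)⁻¹} : Set L) with hR'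
  set S := Algebra.adjoin R' (Set.range z) with hS
  have hR'T : R' ≤ T := Algebra.adjoin_mono Set.subset_union_right
  have hST : ∀ x ∈ S, x ∈ T := by
    intro x hx
    induction hx using Algebra.adjoin_induction with
    | mem x hx => obtain ⟨i, rfl⟩ := hx; exact hzT i
    | algebraMap a => exact hR'T a.2
    | add x y _ _ hx hy => exact add_mem hx hy
    | mul x y _ _ hx hy => exact mul_mem hx hy
  have hUT : ∀ x ∈ Algebra.adjoin S (algebraMap A L '' (t : Set A)), x ∈ T := by
    intro x hx
    induction hx using Algebra.adjoin_induction with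
    | mem x hx => exact Algebra.subset_adjoin (Or.inl (Set.image_subset_range _ _ hx))
    | algebraMap a => exact hST _ a.2
    | add x y _ _ hx hy => exact add_mem hx hy
    | mul x y _ _ hx hy => exact mul_mem hx hy
  have hRU : ∀ a : R, algebraMap R L a ∈ Algebra.adjoin S (algebraMap A L '' (t : Set A)) :=
    fun a => Subalgebra.algebraMap_mem (Algebra.adjoin S (algebraMap A L '' (t : Set A)))
      (⟨algebraMap R L a, Subalgebra.algebraMap_mem S (algebraMap R R' a)⟩ : S)
  have hAU : ∀ a : A, algebraMap A L a ∈ Algebra.adjoin S (algebraMap A L '' (t : Set A)) := by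
    intro a
    have ha : a ∈ Algebra.adjoin R (t : Set A) := ht ▸ Algebra.mem_top
    induction ha using Algebra.adjoin_induction with
    | mem x hx => exact Algebra.subset_adjoin ⟨x, hx, rfl⟩
    | algebraMap a => rw [← IsScalarTower.algebraMap_apply]; exact hRU a
    | add x y _ _ hx hy => rw [map_add (algebraMap A L)]; exact add_mem hx hy
    | mul x y _ _ hx hy => rw [map_mul (algebraMap A L)]; exact mul_mem hx hy
  have hTU : ∀ x ∈ T, x ∈ Algebra.adjoin S (algebraMap A L '' (t : Set A)) := by
    intro x hx
    induction hx using Algebra.adjoin_induction with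
    | mem x hx =>
      rcases hx with ⟨a, rfl⟩ | hx
      · exact hAU a
      · exact Subalgebra.algebraMap_mem (Algebra.adjoin S (algebraMap A L '' (t : Set A)))
          (algebraMap R' S ⟨x, Algebra.subset_adjoin hx⟩)
    | algebraMap a => exact hRU a
    | add x y _ _ hx hy => exact add_mem hx hy
    | mul x y _ _ hx hy => exact mul_mem hx hy
  have hfg := fg_adjoin_of_finite (R := S) (t.finite_toSet.image (algebraMap A L)) (by
    rintro _ ⟨a, ha, rfl⟩
    exact hqt ⟨a, ha⟩ c hc (hqc _))
  obtain ⟨k, g, hg⟩ := Submodule.fg_iff_exists_fin_generating_family.mp hfg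
  refine ⟨k, g, fun j => hUT _ ?_, fun a ha => ?_⟩
  · rw [← Subalgebra.mem_toSubmodule, ← hg]
    exact Submodule.subset_span ⟨j, rfl⟩
  · rw [hg]
    exact hTU a ha

/-- (Noether Normalization Lemma with separating transcendence basis.)
`R ⊆ A` domains, `A` a finitely generated `R`-algebra, `F = Frac R`, `L = Frac A`,
`d = trdeg_F L`.  There are `c ∈ R`, `c ≠ 0`, and `z_1,…,z_d ∈ A[c⁻¹]` algebraically
independent over `R[c⁻¹]` with `A[c⁻¹]` a finite module over `R[c⁻¹][z]`; moreover if
`L/F` is separable (i.e. `L ⊗_F F̄` is reduced), `z` can be chosen to be a separating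
transcendence basis, i.e. with `L/F(z)` separable algebraic. -/
theorem stmt_4 (R A F L : Type) [CommRing R] [IsDomain R] [CommRing A] [IsDomain A]
    [Algebra R A] (hfg : Algebra.FiniteType R A)
    (hinj : Function.Injective (algebraMap R A))
    [Field F] [Algebra R F] [IsFractionRing R F]
    [Field L] [Algebra A L] [IsFractionRing A L]
    [Algebra R L] [IsScalarTower R A L]
    [Algebra F L] [IsScalarTower R F L]
    (d : ℕ)
    (hd : ∃ b : Set L, b.Finite ∧ Nat.card b = d ∧ IsTranscendenceBasis F ((↑) : b → L)) :
    (∃ c : R, c ≠ 0 ∧ ∃ z : Fin d → L, NNConclusion R A L c z) ∧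
    (IsReduced (TensorProduct F (AlgebraicClosure F) L) →
      ∃ c : R, c ≠ 0 ∧ ∃ z : Fin d → L, NNConclusion R A L c z ∧
        Algebra.IsSeparable ↥(IntermediateField.adjoin F (Set.range z)) L) := by
  obtain ⟨t, ht⟩ := hfg.out
  obtain ⟨b, hbf, hbc, hb⟩ := hd
  have htr : Algebra.trdeg F L = d := by
    have : Finite b := hbf
    rw [← hb.cardinalMk_eq_trdeg, ← hbc, Nat.cast_card]
  have hs : (algebraMap A L '' (t : Set A)).Finite := t.finite_toSet.image _
  have hgen : IntermediateField.adjoin F (algebraMap A L '' (t : Set A)) = ⊤ := by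
    have hA : ∀ a : A, algebraMap A L a ∈
        IntermediateField.adjoin F (algebraMap A L '' (t : Set A)) := by
      intro a
      have ha : a ∈ Algebra.adjoin R (t : Set A) := ht ▸ Algebra.mem_top
      induction ha using Algebra.adjoin_induction with
      | mem x hx => exact IntermediateField.subset_adjoin F _ ⟨x, hx, rfl⟩
      | algebraMap a =>
        rw [← IsScalarTower.algebraMap_apply, IsScalarTower.algebraMap_apply R F L]
        exact IntermediateField.algebraMap_mem _ _
      | add x y _ _ hx hy => rw [map_add (algebraMap A L)]; exact add_mem hx hy
      | mul x y _ _ hx hy => rw [map_mul (algebraMap A L)]; exact mul_mem hx hy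
    rw [eq_top_iff]
    intro l _
    obtain ⟨a, a', -, rfl⟩ := IsFractionRing.div_surjective (A := A) l
    exact div_mem (hA a) (hA a')
  constructor
  · obtain ⟨y, hy, hint⟩ := nn_core1 _ hs hgen d htr
    have hint' := fun x hx => hint x (Algebra.subset_adjoin hx)
    obtain ⟨c, hc, h⟩ := nn_spread R A F L t ht y hy hint' (nn_basis _ hgen d htr y hint').1
    exact ⟨c, hc, y, h⟩
  · intro hred
    obtain ⟨y, hy, hint, hsep⟩ := nn_core2 _ hs hgen d htr hred
    have hint' := fun x hx => hint x (Algebra.subset_adjoin hx)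
    obtain ⟨c, hc, h⟩ := nn_spread R A F L t ht y hy hint' (nn_basis _ hgen d htr y hint').1
    exact ⟨c, hc, y, h, hsep⟩
end
end
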